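/- arXiv:0903.2016 — 2 statements merged into one kernel-verified Lean document; each statement's English description precedes it below -/
import Mathlib

section
/- Let q be a prime power and let p(x_1, …, x_n) ∈ F_q[x_1, …, x_n] be an irreducible polynomial of total degree t ≥ 1. Then there exist a positive integer r dividing t, an absolutely irreducible polynomial h(x_1, …, x_n) ∈ F_{q^r}[x_1, …, x_n] of total degree t/r, and a constant c ∈ F_q, such that p(x_1, …, x_n) = c · Π_{σ ∈ G} σ(h(x_1, …, x_n)), where G = Gal(F_{q^r}/F_q) acts on polynomials coefficientwise. Furthermore, if p is homogeneous then h can be taken homogeneous. -/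
open MvPolynomial

/-- A factor of a nonzero homogeneous polynomial over a domain is homogeneous. -/
noncomputable def homHelp (n : ℕ) (R : Type*) [CommRing R] :
    MvPolynomial (Fin n) R →ₐ[R] Polynomial (MvPolynomial (Fin n) R) :=
  aeval (fun i => Polynomial.C (X i) * Polynomial.X)

lemma homHelp_monomial (n : ℕ) (R : Type*) [CommRing R] (d : Fin n →₀ ℕ) (a : R) :
    homHelp n R (monomial d a) = Polynomial.C (monomial d a) * Polynomial.X ^ d.degree := by
  unfold homHelp
  rw [aeval_monomial, monomial_eq, Finsupp.prod_fintype _ _ (by simp),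
    Finsupp.prod_fintype _ _ (by simp), Finsupp.degree_eq_sum]
  simp only [mul_pow, Finset.prod_mul_distrib, Finset.prod_pow_eq_pow_sum, map_mul, map_prod,
    map_pow, mul_assoc]
  congr 1

lemma homHelp_coeff (n : ℕ) (R : Type*) [CommRing R] (f : MvPolynomial (Fin n) R)
    (d : Fin n →₀ ℕ) (k : ℕ) :
    coeff d ((homHelp n R f).coeff k) = if d.degree = k then coeff d f else 0 := by
  induction f using MvPolynomial.induction_on' with
  | monomial u a =>
    rw [homHelp_monomial, Polynomial.coeff_C_mul_X_pow]
    by_cases h : u = d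
    · subst h
      by_cases h2 : u.degree = k
      · subst h2; simp
      · rw [if_neg (Ne.symm h2), if_neg h2]; simp
    · split_ifs <;> simp [coeff_monomial, h]
  | add p q hp hq =>
    rw [map_add, Polynomial.coeff_add, coeff_add, hp, hq]
    split_ifs <;> simp

lemma homHelp_inj (n : ℕ) (R : Type*) [CommRing R] (f : MvPolynomial (Fin n) R)
    (hf : f ≠ 0) : homHelp n R f ≠ 0 := by
  obtain ⟨d, hd⟩ := ne_zero_iff.mp hf
  intro h
  have := homHelp_coeff n R f d d.degree
  rw [h] at this
  simp at this
  exact hd this.symm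

lemma homog_of_mul {n : ℕ} {R : Type*} [CommRing R] [IsDomain R] (f g : MvPolynomial (Fin n) R)
    (hfg : f * g ≠ 0) (t : ℕ) (h : (f * g).IsHomogeneous t) :
    f.IsHomogeneous f.totalDegree := by
  have hf := left_ne_zero_of_mul hfg
  have hg := right_ne_zero_of_mul hfg
  have hf' := homHelp_inj n R f hf
  have hg' := homHelp_inj n R g hg
  have e : homHelp n R (f * g) = Polynomial.C (f * g) * Polynomial.X ^ t := by
    ext k d
    rw [homHelp_coeff, Polynomial.coeff_C_mul_X_pow]
    by_cases h1 : d.degree = t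
    · subst h1
      by_cases h2 : d.degree = k
      · simp [h2]
      · rw [if_neg h2, if_neg (Ne.symm h2)]; simp
    · rw [h.coeff_eq_zero h1]
      split_ifs <;> simp [h.coeff_eq_zero h1]
  have e1 : (homHelp n R (f * g)).natDegree = t := by
    rw [e, Polynomial.natDegree_C_mul_X_pow _ _ hfg]
  have e2 : (homHelp n R (f * g)).natTrailingDegree = t := by
    rw [e, Polynomial.natTrailingDegree_mul_X_pow (Polynomial.C_ne_zero.mpr hfg),
      Polynomial.natTrailingDegree_C, zero_add]
  rw [map_mul, Polynomial.natDegree_mul hf' hg'] at e1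
  rw [map_mul, Polynomial.natTrailingDegree_mul hf' hg'] at e2
  have l1 := Polynomial.natTrailingDegree_le_natDegree (homHelp n R f)
  have l2 := Polynomial.natTrailingDegree_le_natDegree (homHelp n R g)
  have key : f.IsHomogeneous (homHelp n R f).natDegree := by
    intro d hd
    change Finsupp.weight (fun _ => 1) d = _
    rw [← Finsupp.degree_eq_weight_one]
    have c := homHelp_coeff n R f d d.degree
    rw [if_pos rfl] at c
    have c0 : (homHelp n R f).coeff d.degree ≠ 0 := by
      intro h0
      rw [h0] at c
      exact hd (by simpa using c.symm)
    have a1 := Polynomial.le_natDegree_of_ne_zero c0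
    have a2 := Polynomial.natTrailingDegree_le_of_ne_zero c0
    omega
  rwa [key.totalDegree hf]

lemma dvd_descent {σ A B : Type*} [Field A] [Field B] [Algebra A B] (a b : MvPolynomial σ A)
    (h : map (algebraMap A B) b ∣ map (algebraMap A B) a) : b ∣ a := by
  obtain ⟨c, hc⟩ := h
  obtain ⟨ρ, hρ⟩ := (Algebra.linearMap A B).exists_leftInverse_of_injective
    (LinearMap.ker_eq_bot.mpr (algebraMap A B).injective)
  have hρ1 : ∀ x, ρ (algebraMap A B x) = x := fun x => by
    simpa using LinearMap.congr_fun hρ x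
  classical
  let d : MvPolynomial σ A := ∑ m ∈ c.support, monomial m (ρ (coeff m c))
  have hd : ∀ m, coeff m d = ρ (coeff m c) := by
    intro m
    simp only [d, coeff_sum, coeff_monomial, Finset.sum_ite_eq']
    split_ifs with h
    · rfl
    · rw [notMem_support_iff.mp h, map_zero]
  refine ⟨d, ?_⟩
  ext m
  have := congrArg (fun x => ρ (coeff m x)) hc
  simp only [coeff_map, hρ1, coeff_mul, map_sum] at this
  rw [this, coeff_mul]
  refine Finset.sum_congr rfl fun x _ => ?_
  rw [hd, ← Algebra.smul_def, map_smul, smul_eq_mul]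

lemma totalDegree_map_inj {σ A B : Type*} [Field A] [Field B] (f : A →+* B)
    (a : MvPolynomial σ A) : (map f a).totalDegree = a.totalDegree := by
  unfold totalDegree
  rw [support_map_of_injective _ f.injective]

lemma isUnit_of_map {σ A B : Type*} [Field A] [Field B] (f : A →+* B) (a : MvPolynomial σ A)
    (h : IsUnit (map f a)) : IsUnit a := by
  rw [isUnit_iff_totalDegree_of_isReduced] at *
  rw [totalDegree_map_inj f, coeff_map] at h
  simpa using h

lemma irred_of_map {σ A B : Type*} [Field A] [Field B] (f : A →+* B) (a : MvPolynomial σ A)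
    (h : Irreducible (map f a)) : Irreducible a := by
  have : IsLocalHom (map f : MvPolynomial σ A →+* MvPolynomial σ B) := ⟨fun a h => isUnit_of_map f a h⟩
  exact Irreducible.of_map (f := (map f : MvPolynomial σ A →+* MvPolynomial σ B)) h

lemma assoc_eq {σ A : Type*} [Field A] (a b : MvPolynomial σ A) (m : σ →₀ ℕ)
    (ha : coeff m a = 1) (hb : coeff m b = 1) (h : Associated a b) : a = b := by
  obtain ⟨u, rfl⟩ := h
  obtain ⟨x, hx, hu⟩ := isUnit_iff_eq_C_of_isReduced.mp u.isUnit
  rw [hu, mul_comm, coeff_C_mul, ha, mul_one] at hb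
  rw [hu, hb]; simp

lemma core {n : ℕ} {F E : Type*} [Field F] [Field E] [Algebra F E] [FiniteDimensional F E]
    [IsGalois F E] (P : MvPolynomial (Fin n) F) (hirr : Irreducible P)
    (h : MvPolynomial (Fin n) E) (hh : Irreducible h) (m : Fin n →₀ ℕ) (hm : coeff m h = 1)
    (hd : h ∣ map (algebraMap F E) P)
    (hs : ∀ σ : E ≃ₐ[F] E, map (σ : E →+* E) h = h → σ = 1) :
    ∃ c : F, map (algebraMap F E) P =
            C (algebraMap F E c) *
              (∏ σ : E ≃ₐ[F] E, MvPolynomial.map (σ : E →+* E) h) := by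
  have hP : ∀ σ : E ≃ₐ[F] E,
      map (σ : E →+* E) (map (algebraMap F E) P) = map (algebraMap F E) P := by
    intro σ
    rw [map_map]
    congr 2
    ext x; simp
  have hcomp : ∀ (σ τ : E ≃ₐ[F] E) (f : MvPolynomial (Fin n) E),
      map (σ : E →+* E) (map (τ : E →+* E) f) = map ((σ * τ : E ≃ₐ[F] E) : E →+* E) f := by
    intro σ τ f
    rw [map_map]
    congr 2
  have hirrσ : ∀ σ : E ≃ₐ[F] E, Irreducible (map (σ : E →+* E) h) := by
    intro σ
    apply irred_of_map ((σ⁻¹ : E ≃ₐ[F] E) : E →+* E)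
    rw [hcomp, inv_mul_cancel]
    have : ((1 : E ≃ₐ[F] E) : E →+* E) = RingHom.id E := rfl
    rwa [this, map_id]
  have hdvd : ∏ σ : E ≃ₐ[F] E, map (σ : E →+* E) h ∣ map (algebraMap F E) P := by
    apply Finset.prod_dvd_of_isRelPrime
    · intro σ _ τ _ hne
      show IsRelPrime _ _
      rw [(hirrσ σ).isRelPrime_iff_not_dvd]
      intro hdv
      have has := (hirrσ σ).associated_of_dvd (hirrσ τ) hdv
      have := assoc_eq _ _ m (by simp [coeff_map, hm]) (by simp [coeff_map, hm]) has
      apply hne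
      have h2 := hs (τ⁻¹ * σ) (by
        rw [← hcomp, this, hcomp, inv_mul_cancel]
        have : ((1 : E ≃ₐ[F] E) : E →+* E) = RingHom.id E := rfl
        rw [this, map_id])
      exact (inv_mul_eq_one.mp h2).symm
    · intro σ _
      rw [← hP σ]
      exact map_dvd (map (σ : E →+* E)) hd
  have hinv : ∀ τ : E ≃ₐ[F] E, map (τ : E →+* E) (∏ σ : E ≃ₐ[F] E, map (σ : E →+* E) h)
      = ∏ σ : E ≃ₐ[F] E, map (σ : E →+* E) h := by
    intro τ
    rw [map_prod]
    simp only [hcomp]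
    exact Fintype.prod_equiv (Equiv.mulLeft τ) _ _ (fun σ => rfl)
  obtain ⟨N, hN⟩ : ∃ N : MvPolynomial (Fin n) F,
      map (algebraMap F E) N = ∏ σ : E ≃ₐ[F] E, map (σ : E →+* E) h := by
    rw [← Set.mem_range, mem_range_map_iff_coeffs_subset]
    intro x hx
    obtain ⟨d, hd1, rfl⟩ := mem_coeffs_iff.mp hx
    have := (IsGalois.mem_bot_iff_fixed (F := F)
      (coeff d (∏ σ : E ≃ₐ[F] E, map (σ : E →+* E) h))).mpr (by
        intro τ
        conv_rhs => rw [← hinv τ]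
        rw [coeff_map]
        rfl)
    rw [IntermediateField.mem_bot] at this
    exact this
  rw [← hN] at hdvd ⊢
  have hNP := dvd_descent _ _ hdvd
  have hNu : ¬ IsUnit N := by
    intro hu
    have hu2 := hu.map (map (algebraMap F E) : MvPolynomial (Fin n) F →+* _)
    rw [hN] at hu2
    have := isUnit_of_dvd_unit (Finset.dvd_prod_of_mem _ (Finset.mem_univ (1 : E ≃ₐ[F] E))) hu2
    exact (hirrσ 1).not_isUnit this
  obtain ⟨u, hu⟩ := hNP
  have huu := (hirr.isUnit_or_isUnit hu).resolve_left hNu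
  obtain ⟨x, hx, rfl⟩ := isUnit_iff_eq_C_of_isReduced.mp huu
  refine ⟨x, ?_⟩
  rw [hu, map_mul, map_C, mul_comm]

lemma deg_prod {n : ℕ} {E ι : Type*} [Field E] (s : Finset ι) (f : ι → MvPolynomial (Fin n) E)
    (k : ℕ) (hf : ∀ i, f i ≠ 0) (hk : ∀ i, (f i).totalDegree = k) :
    (∏ i ∈ s, f i).totalDegree = s.card * k := by
  classical
  induction s using Finset.induction_on with
  | empty => simp
  | insert a s ha ih =>
    rw [Finset.prod_insert ha, totalDegree_mul_of_isDomain (hf a)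
      (Finset.prod_ne_zero_iff.mpr fun i _ => hf i), ih, hk, Finset.card_insert_of_notMem ha]
    ring

lemma main_aux {n : ℕ} {F E K : Type*} [Field F] [Field E] [Field K] [Algebra F E] [Algebra F K]
    [Algebra E K] [IsScalarTower F E K] [FiniteDimensional F E] [IsGalois F E] [IsAlgClosure E K]
    (P : MvPolynomial (Fin n) F) (hirr : Irreducible P) (g : MvPolynomial (Fin n) K)
    (hg : Irreducible g) (m : Fin n →₀ ℕ) (hm : coeff m g = 1)
    (hd : g ∣ map (algebraMap F K) P)
    (hr : ∀ x : E, algebraMap E K x ∈ IntermediateField.adjoin F (g.coeffs : Set K))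
    (hco : (g.coeffs : Set K) ⊆ Set.range (algebraMap E K)) :
    ∃ (h : MvPolynomial (Fin n) E) (c : F),
      Irreducible (MvPolynomial.map (algebraMap E (AlgebraicClosure E)) h) ∧
      Module.finrank F E * h.totalDegree = P.totalDegree ∧
      MvPolynomial.map (algebraMap F E) P =
        C (algebraMap F E c) *
          (∏ σ : E ≃ₐ[F] E, MvPolynomial.map (σ : E →+* E) h) ∧
      (∀ t, P.IsHomogeneous t → h.IsHomogeneous h.totalDegree) := by
  obtain ⟨h, rfl⟩ := mem_range_map_iff_coeffs_subset.mpr hco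
  have hh := irred_of_map _ _ hg
  have hm1 : coeff m h = 1 := by
    rw [coeff_map] at hm
    exact (algebraMap E K).injective (by simpa using hm)
  have hd1 : h ∣ map (algebraMap F E) P := by
    apply dvd_descent (B := K)
    rwa [map_map, ← IsScalarTower.algebraMap_eq]
  have hs : ∀ σ : E ≃ₐ[F] E, map (σ : E →+* E) h = h → σ = 1 := by
    intro σ hσ
    let S : IntermediateField F E := IntermediateField.fixedField (Subgroup.zpowers σ)
    have hS : ∀ x, σ x = x → x ∈ S := by
      intro x hx
      rw [IntermediateField.mem_fixedField_iff]
      intro f hf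
      have : Subgroup.zpowers σ ≤ MulAction.stabilizer (E ≃ₐ[F] E) x := by
        rw [Subgroup.zpowers_le]
        exact hx
      exact this hf
    have hS2 : ∀ x ∈ S, σ x = x := fun x hx =>
      (IntermediateField.mem_fixedField_iff _ _).mp hx σ (Subgroup.mem_zpowers σ)
    have hle : IntermediateField.adjoin F ((map (algebraMap E K) h).coeffs : Set K) ≤
        S.map (IsScalarTower.toAlgHom F E K) := by
      rw [IntermediateField.adjoin_le_iff]
      intro x hx
      obtain ⟨d, hd1, rfl⟩ := mem_coeffs_iff.mp hx
      refine ⟨coeff d h, hS _ ?_, ?_⟩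
      · have := congrArg (coeff d) hσ
        rw [coeff_map] at this
        exact this
      · rw [coeff_map]; rfl
    ext x
    obtain ⟨y, hy, hyx⟩ := hle (hr x)
    have : y = x := (algebraMap E K).injective hyx
    subst this
    exact hS2 y hy
  obtain ⟨c, hc⟩ := core P hirr h hh m hm1 hd1 hs
  have hP0 : map (algebraMap F E) P ≠ 0 := by
    rw [Ne, map_eq_zero_iff _ (map_injective _ (algebraMap F E).injective)]
    exact hirr.ne_zero
  refine ⟨h, c, ?_, ?_, hc, ?_⟩
  · let e : AlgebraicClosure E ≃ₐ[E] K := IsAlgClosure.equiv E (AlgebraicClosure E) K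
    apply irred_of_map (e : AlgebraicClosure E →+* K)
    rw [map_map]
    convert hg using 3
    ext x
    simp
  · have h1 := congrArg totalDegree hc
    have hc0 : c ≠ 0 := by
      rintro rfl
      simp at hc
      exact hP0 hc
    have hne : ∀ σ : E ≃ₐ[F] E, map (σ : E →+* E) h ≠ 0 := fun σ => by
      rw [Ne, map_eq_zero_iff _ (map_injective _ (RingHom.injective _))]
      exact hh.ne_zero
    rw [totalDegree_map_inj, totalDegree_mul_of_isDomain (by simpa using hc0)
      (Finset.prod_ne_zero_iff.mpr fun i _ => hne i), totalDegree_C, zero_add,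
      deg_prod _ _ h.totalDegree hne (fun σ => totalDegree_map_inj _ _), Finset.card_univ,
      ← Nat.card_eq_fintype_card, IsGalois.card_aut_eq_finrank] at h1
    exact h1.symm
  · intro t ht
    obtain ⟨w, hw⟩ := hd1
    rw [hw] at hP0
    exact homog_of_mul h w hP0 t (hw ▸ ht.map _)

lemma equiv_aux {F E K : Type*} [Field F] [Finite F] [Field E] [Field K] [Algebra F E]
    [Algebra F K] [FiniteDimensional F E] [FiniteDimensional F K]
    (h : Module.finrank F E = Module.finrank F K) : Nonempty (E ≃ₐ[F] K) := by
  obtain ⟨p, hp⟩ := CharP.exists F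
  have : Fact p.Prime := ⟨CharP.char_is_prime F p⟩
  have : NeZero (Module.finrank F K) := NeZero.of_pos Module.finrank_pos
  exact ⟨(FiniteField.algEquivExtension F p _ E h).trans
    (FiniteField.algEquivExtension F p _ K rfl).symm⟩

lemma key_aux {n : ℕ} {F : Type*} [Field F] [Finite F]
    (P : MvPolynomial (Fin n) F) (hirr : Irreducible P)
    (g : MvPolynomial (Fin n) (AlgebraicClosure F))
    (hg : Irreducible g) (m : Fin n →₀ ℕ) (hm : coeff m g = 1)
    (hd : g ∣ map (algebraMap F (AlgebraicClosure F)) P)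
    (E : Type*) [Field E] [Algebra F E] [FiniteDimensional F E]
    (e : E ≃ₐ[F] IntermediateField.adjoin F (g.coeffs : Set (AlgebraicClosure F))) :
    ∃ (h : MvPolynomial (Fin n) E) (c : F),
      Irreducible (MvPolynomial.map (algebraMap E (AlgebraicClosure E)) h) ∧
      Module.finrank F E * h.totalDegree = P.totalDegree ∧
      MvPolynomial.map (algebraMap F E) P =
        C (algebraMap F E c) *
          (∏ σ : E ≃ₐ[F] E, MvPolynomial.map (σ : E →+* E) h) ∧
      (∀ t, P.IsHomogeneous t → h.IsHomogeneous h.totalDegree) := by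
  let φ : E →ₐ[F] AlgebraicClosure F := (IntermediateField.val _).comp e.toAlgHom
  letI : Algebra E (AlgebraicClosure F) := φ.toRingHom.toAlgebra
  have : IsScalarTower F E (AlgebraicClosure F) :=
    IsScalarTower.of_algebraMap_eq fun x => (φ.commutes x).symm
  have : Finite E := Module.finite_of_finite F
  have : IsGalois F E := inferInstance
  have : Algebra.IsAlgebraic E (AlgebraicClosure F) := Algebra.IsAlgebraic.tower_top (K := F) E
  have : IsAlgClosure E (AlgebraicClosure F) := ⟨inferInstance, inferInstance⟩
  refine main_aux P hirr g hg m hm hd (fun x => (e x).2) fun x hx => ?_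
  refine ⟨e.symm ⟨x, IntermediateField.subset_adjoin _ _ hx⟩, ?_⟩
  change ((e (e.symm _) : _) : AlgebraicClosure F) = x
  rw [e.apply_symm_apply]

/-- An irreducible polynomial of degree `t` over the finite field `F` (of prime-power
cardinality `q`) is, up to a constant in `F`, the product of the `Gal(F_{q^r}/F_q)`-conjugates
of an absolutely irreducible polynomial `h` of degree `t/r` over `F_{q^r}`, for some `r ∣ t`;
moreover if `p` is homogeneous then `h` can be taken homogeneous. -/
theorem stmt_13 (p' k q n t : ℕ) [Fact (Nat.Prime p')] (hk : 0 < k) (hq : q = p' ^ k)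
    (F : Type*) [Field F] [Fintype F] (hF : Fintype.card F = q)
    (P : MvPolynomial (Fin n) F) (hirr : Irreducible P)
    (hdeg : P.totalDegree = t) (ht : 1 ≤ t) :
    ∃ r : ℕ, 0 < r ∧ r ∣ t ∧
      ∀ (E : Type) [Field E] [Algebra F E] [FiniteDimensional F E],
        Module.finrank F E = r →
        ∃ (h : MvPolynomial (Fin n) E) (c : F),
          Irreducible (MvPolynomial.map (algebraMap E (AlgebraicClosure E)) h) ∧
          h.totalDegree = t / r ∧
          MvPolynomial.map (algebraMap F E) P =
            C (algebraMap F E c) *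
              (∏ σ : E ≃ₐ[F] E, MvPolynomial.map (σ : E →+* E) h) ∧
          (P.IsHomogeneous t → h.IsHomogeneous (t / r)) := by
  
  subst hdeg
  let K := AlgebraicClosure F
  have hPu : ¬ IsUnit (map (algebraMap F K) P) := fun h => hirr.not_isUnit (isUnit_of_map _ _ h)
  have hP0 : map (algebraMap F K) P ≠ 0 := by
    rw [Ne, map_eq_zero_iff _ (map_injective _ (algebraMap F K).injective)]
    exact hirr.ne_zero
  obtain ⟨g0, hg0, hg0d⟩ := WfDvdMonoid.exists_irreducible_factor hPu hP0
  obtain ⟨m, hm0⟩ := ne_zero_iff.mp hg0.ne_zero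
  obtain ⟨g, hg, hgd, hm⟩ : ∃ g : MvPolynomial (Fin n) K, Irreducible g ∧
      g ∣ map (algebraMap F K) P ∧ coeff m g = 1 := by
    have hu : IsUnit (C (coeff m g0)⁻¹ : MvPolynomial (Fin n) K) :=
      (isUnit_iff_ne_zero.mpr (inv_ne_zero hm0)).map C
    refine ⟨C (coeff m g0)⁻¹ * g0, ?_, ?_, ?_⟩
    · exact (irreducible_isUnit_mul hu).mpr hg0
    · exact hu.mul_left_dvd.mpr hg0d
    · rw [coeff_C_mul, inv_mul_cancel₀ hm0]
  let L := IntermediateField.adjoin F (g.coeffs : Set K)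
  have : FiniteDimensional F L :=
    IntermediateField.finiteDimensional_adjoin fun x _ => Algebra.IsIntegral.isIntegral x
  obtain ⟨h1, c1, -, hdeg1, -⟩ := key_aux P hirr g hg m hm hgd L AlgEquiv.refl
  refine ⟨Module.finrank F L, Module.finrank_pos, ⟨_, hdeg1.symm⟩, ?_⟩
  intro E _ _ _ hE
  obtain ⟨e⟩ := equiv_aux hE
  obtain ⟨h, c, h1, h2, h3, h4⟩ := key_aux P hirr g hg m hm hgd E e
  have h5 : h.totalDegree = P.totalDegree / Module.finrank F L := by
    rw [← h2, hE, Nat.mul_div_cancel_left _ Module.finrank_pos]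
  exact ⟨h, c, h1, h5, h3, fun ht => h5 ▸ h4 _ ht⟩
end

section
/- Let t = 2^i·ℓ + 1 where i ≥ 1 and ℓ ≥ 3 is odd, with ℓ dividing 2^i − 1 and ℓ ≠ 2^i − 1. Suppose g_t(x,y) is irreducible in F_2[x,y]. Then there is no factorization g_t = g_1 · g_2 over the algebraic closure of F_2 with g_1 and g_2 nonconstant polynomials of equal total degree. -/
open MvPolynomial

section
variable {K : Type*} [Field K]

/-- polynomials of total degree less than m -/
noncomputable def DD (K : Type*) [Field K] (m : ℕ) : Submodule K (MvPolynomial (Fin 2) K) :=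
  restrictSupport K {s | s.degree < m}

/-- forms of degree m -/
noncomputable def EE (K : Type*) [Field K] (m : ℕ) : Submodule K (MvPolynomial (Fin 2) K) :=
  restrictSupport K {s | s.degree = m}

lemma mem_DD {m : ℕ} {p : MvPolynomial (Fin 2) K} :
    p ∈ DD K m ↔ ∀ s, m ≤ s.degree → p.coeff s = 0 := by
  rw [DD, mem_restrictSupport_iff]
  constructor
  · intro h s hs
    by_contra hne
    have := h (by simpa using hne : s ∈ (p.support : Set _))
    simp at this
    omega
  · intro h s hs
    by_contra hne
    simp at hne hs
    exact hs (h s hne)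

lemma mem_EE {m : ℕ} {p : MvPolynomial (Fin 2) K} :
    p ∈ EE K m ↔ p.IsHomogeneous m := by
  rw [EE, mem_restrictSupport_iff]
  constructor
  · intro h s hs
    have := h (by simpa using hs : s ∈ (p.support : Set _))
    have h2 : s.degree = m := this
    rw [Finsupp.degree_eq_weight_one] at h2
    exact h2
  · intro h s hs
    have h2 := h (by simpa using hs : p.coeff s ≠ 0)
    change s.degree = m
    rw [Finsupp.degree_eq_weight_one]
    exact h2

noncomputable def e2 : (Fin 2 →₀ ℕ) ≃ ℕ × ℕ :=
  Finsupp.equivFunOnFinite.trans (finTwoArrowEquiv ℕ)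

lemma e2_deg (s : Fin 2 →₀ ℕ) : s.degree = (e2 s).1 + (e2 s).2 := by
  simp [e2, Finsupp.degree_eq_sum, Fin.sum_univ_two]

noncomputable def eqE (m : ℕ) : {s : Fin 2 →₀ ℕ | s.degree = m} ≃ Finset.HasAntidiagonal.antidiagonal m :=
  e2.subtypeEquiv (fun s => by simp [e2_deg])

noncomputable def eqD (m : ℕ) : {s : Fin 2 →₀ ℕ | s.degree < m} ≃ 
    ((Finset.range m).biUnion Finset.HasAntidiagonal.antidiagonal : Finset (ℕ × ℕ)) :=
  e2.subtypeEquiv (fun s => by simp [e2_deg])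

lemma card_bi (m : ℕ) : 
    ((Finset.range m).biUnion Finset.HasAntidiagonal.antidiagonal : Finset (ℕ × ℕ)).card = (m+1).choose 2 := by
  rw [Finset.card_biUnion]
  · simp only [Finset.Nat.card_antidiagonal]
    induction m with
    | zero => rfl
    | succ n ih => rw [Finset.sum_range_succ, ih, Nat.choose_succ_succ' (n+1) 1]; simp; ring
  · intro x _ y _ hxy
    rw [Function.onFun, Finset.disjoint_left]
    intro a ha hb
    simp at ha hb
    omega

lemma finrank_DD (m : ℕ) : Module.finrank K (DD K m) = (m+1).choose 2 := by
  rw [DD, Module.finrank_eq_nat_card_basis (basisRestrictSupport K _), Nat.card_congr (eqD m)]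
  simp only [Nat.card_eq_fintype_card, Fintype.card_coe, card_bi]

lemma finrank_EE (m : ℕ) : Module.finrank K (EE K m) = m+1 := by
  rw [EE, Module.finrank_eq_nat_card_basis (basisRestrictSupport K _), Nat.card_congr (eqE m)]
  simp only [Nat.card_eq_fintype_card, Fintype.card_coe, Finset.Nat.card_antidiagonal]

instance (m : ℕ) : Module.Finite K (DD K m) := by
  have : Finite {s : Fin 2 →₀ ℕ | s.degree < m} := Finite.of_equiv _ (eqD m).symm
  exact Module.Finite.of_basis (basisRestrictSupport K _)

instance (m : ℕ) : Module.Finite K (EE K m) := by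
  have : Finite {s : Fin 2 →₀ ℕ | s.degree = m} := Finite.of_equiv _ (eqE m).symm
  exact Module.Finite.of_basis (basisRestrictSupport K _)

lemma hc_mul (n : ℕ) (u v : MvPolynomial (Fin 2) K) :
    homogeneousComponent n (u * v) = ∑ x ∈ Finset.HasAntidiagonal.antidiagonal n,
      homogeneousComponent x.1 u * homogeneousComponent x.2 v := by
  induction u using MvPolynomial.induction_on' with
  | add p q hp hq => simp [add_mul, hp, hq, Finset.sum_add_distrib]
  | monomial a r =>
    induction v using MvPolynomial.induction_on' with
    | add p q hp hq => simp [mul_add, hp, hq, Finset.sum_add_distrib]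
    | monomial b s =>
      rw [monomial_mul, homogeneousComponent_of_mem (isHomogeneous_monomial (r * s) rfl)]
      simp_rw [homogeneousComponent_of_mem (isHomogeneous_monomial r (d := a) rfl),
        homogeneousComponent_of_mem (isHomogeneous_monomial s (d := b) rfl)]
      split_ifs with h
      · rw [Finset.sum_eq_single (a.degree, b.degree)]
        · simp
        · rintro ⟨i, j⟩ hij hne
          simp only [ne_eq, Prod.mk.injEq] at hne
          simp only
          split_ifs <;> simp_all
        · intro hh; exfalso; apply hh; simp [h]
      · symm
        apply Finset.sum_eq_zero
        rintro ⟨i, j⟩ hij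
        rw [Finset.HasAntidiagonal.mem_antidiagonal] at hij
        split_ifs with h1 h2
        · exfalso; apply h; rw [map_add]; simp only at hij h1 h2; omega
        all_goals simp

local notation "hc" => homogeneousComponent
local notation "MM" => idealOfVars (Fin 2) K

lemma mem_DD' {m : ℕ} {p : MvPolynomial (Fin 2) K} :
    p ∈ DD K m ↔ ∀ n, m ≤ n → hc n p = 0 := by
  rw [mem_DD]
  constructor
  · intro h n hn
    ext s
    rw [coeff_homogeneousComponent]
    split_ifs with h1
    · rw [h s (by omega)]; simp
    · simp
  · intro h s hs
    have := congrArg (coeff s) (h s.degree hs)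
    simpa [coeff_homogeneousComponent] using this

lemma mem_MM' {m : ℕ} {p : MvPolynomial (Fin 2) K} :
    p ∈ MM ^ m ↔ ∀ n, n < m → hc n p = 0 := by
  rw [mem_pow_idealOfVars_iff']
  constructor
  · intro h n hn
    ext s
    rw [coeff_homogeneousComponent]
    split_ifs with h1
    · rw [h s (by omega)]; simp
    · simp
  · intro h s hs
    have := congrArg (coeff s) (h s.degree hs)
    simpa [coeff_homogeneousComponent] using this

lemma ext_hc {p : MvPolynomial (Fin 2) K} (h : ∀ n, hc n p = 0) : p = 0 := by
  ext s
  have := congrArg (coeff s) (h s.degree)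
  simpa [coeff_homogeneousComponent] using this

lemma hc_hc (i j : ℕ) (p : MvPolynomial (Fin 2) K) :
    hc i (hc j p) = if i = j then hc j p else 0 :=
  homogeneousComponent_of_mem (homogeneousComponent_mem j p)

/-- truncation -/
noncomputable def trc (K : Type*) [Field K] (m : ℕ) :
    MvPolynomial (Fin 2) K →ₗ[K] MvPolynomial (Fin 2) K :=
  ∑ j ∈ Finset.range m, homogeneousComponent j

lemma hc_trc (m n : ℕ) (p : MvPolynomial (Fin 2) K) :
    hc n (trc K m p) = if n < m then hc n p else 0 := by
  simp [trc, LinearMap.sum_apply, map_sum, hc_hc]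

lemma trc_mem (m : ℕ) (p : MvPolynomial (Fin 2) K) : trc K m p ∈ DD K m := by
  rw [mem_DD']
  intro n hn
  rw [hc_trc, if_neg (by omega)]

lemma sub_trc_mem (m : ℕ) (p : MvPolynomial (Fin 2) K) : p - trc K m p ∈ MM ^ m := by
  rw [mem_MM']
  intro n hn
  rw [map_sub, hc_trc, if_pos hn, sub_self]

lemma relprime_zero {a b k : ℕ} {U V c d : MvPolynomial (Fin 2) K} (hV : V.IsHomogeneous b)
    (hV0 : V ≠ 0) (hUV : IsRelPrime U V) (hck : c.IsHomogeneous k)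
    (hk : k < b) (h : c * U + d * V = 0) : c = 0 ∧ d = 0 := by
  have h0 : c = 0 := by
    have h1 : V ∣ c := by
      apply hUV.symm.dvd_of_dvd_mul_right (z := U)
      exact ⟨-d, by linear_combination h⟩
    obtain ⟨e, rfl⟩ := h1
    by_contra hne
    have he : e ≠ 0 := right_ne_zero_of_mul hne
    have h2 := hck.totalDegree hne
    rw [totalDegree_mul_of_isDomain hV0 he, hV.totalDegree hV0] at h2
    omega
  refine ⟨h0, ?_⟩
  subst h0
  simpa [hV0] using h

lemma hc_mul_low {a n : ℕ} {c u : MvPolynomial (Fin 2) K} (hu : u ∈ MM ^ a)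
    (h : ∀ i, i + a < n → hc i c = 0) :
    hc n (c * u) = (if a ≤ n then hc (n - a) c else 0) * hc a u := by
  rw [mem_MM'] at hu
  rw [hc_mul]
  split_ifs with hn
  · rw [Finset.sum_eq_single (n - a, a)]
    · rintro ⟨i, j⟩ hij hne
      rw [Finset.HasAntidiagonal.mem_antidiagonal] at hij
      simp only [ne_eq, Prod.mk.injEq] at hij hne ⊢
      by_cases hj : j < a
      · rw [hu j hj, mul_zero]
      · rw [h i (by omega), zero_mul]
    · intro hh; exfalso; apply hh; rw [Finset.HasAntidiagonal.mem_antidiagonal]; simp; omega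
  · rw [zero_mul]
    apply Finset.sum_eq_zero
    rintro ⟨i, j⟩ hij
    rw [Finset.HasAntidiagonal.mem_antidiagonal] at hij
    simp only at hij
    rw [hu j (by omega), mul_zero]

lemma hc_mul_top {k a : ℕ} {c u : MvPolynomial (Fin 2) K} (hu : u ∈ DD K (a + 1))
    (hcc : c ∈ DD K (k + 1)) :
    hc (k + a) (c * u) = hc k c * hc a u := by
  rw [mem_DD'] at hu hcc
  rw [hc_mul]
  rw [Finset.sum_eq_single (k, a)]
  · rintro ⟨i, j⟩ hij hne
    rw [Finset.HasAntidiagonal.mem_antidiagonal] at hij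
    simp only [ne_eq, Prod.mk.injEq] at hij hne ⊢
    by_cases hj : a + 1 ≤ j
    · rw [hu j hj, mul_zero]
    · rw [hcc i (by omega), zero_mul]
  · intro hh; exfalso; apply hh; rw [Finset.HasAntidiagonal.mem_antidiagonal]

lemma local_inj {a b : ℕ} {u v c d : MvPolynomial (Fin 2) K} (hu : u ∈ MM ^ a) (hv : v ∈ MM ^ b)
    (hV0 : hc b v ≠ 0) (hUV : IsRelPrime (hc a u) (hc b v))
    (hcb : c ∈ DD K b) (hda : d ∈ DD K a) (h : c * u + d * v ∈ MM ^ (a + b)) :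
    c = 0 ∧ d = 0 := by
  have key : ∀ n, (∀ i, i + a < n → hc i c = 0) ∧ (∀ i, i + b < n → hc i d = 0) := by
    intro n
    induction n with
    | zero => simp
    | succ n ih =>
      have h1 : (if a ≤ n then hc (n - a) c else 0) = 0 ∧
          (if b ≤ n then hc (n - b) d else 0) = 0 := by
        rw [mem_DD'] at hcb hda
        by_cases hn : a + b ≤ n
        · rw [hcb (n - a) (by omega), hda (n - b) (by omega)]; simp
        · rw [mem_MM'] at h
          have h2 := h n (by omega)
          rw [map_add, hc_mul_low hu ih.1, hc_mul_low hv ih.2] at h2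
          by_cases han : a ≤ n
          · refine relprime_zero (a := a) (k := n - a) (homogeneousComponent_isHomogeneous b v)
              hV0 hUV ?_ (by omega) h2
            rw [if_pos han]; exact homogeneousComponent_isHomogeneous _ _
          · rw [if_neg han] at h2 ⊢
            refine ⟨rfl, ?_⟩
            simpa [hV0] using h2
      refine ⟨fun i hi => ?_, fun i hi => ?_⟩
      · by_cases hlt : i + a < n
        · exact ih.1 i hlt
        · have := h1.1
          rwa [if_pos (by omega), show n - a = i by omega] at this
      · by_cases hlt : i + b < n
        · exact ih.2 i hlt
        · have := h1.2
          rwa [if_pos (by omega), show n - b = i by omega] at this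
  exact ⟨ext_hc fun n => (key (n + a + 1)).1 n (by omega),
    ext_hc fun n => (key (n + b + 1)).2 n (by omega)⟩

lemma choose_id (a b : ℕ) : (a + b + 1).choose 2 = (a + 1).choose 2 + (b + 1).choose 2 + a * b := by
  have h : ∀ n : ℕ, 2 * (n + 1).choose 2 = n * (n + 1) := by
    intro n
    rw [Nat.choose_two_right, Nat.add_sub_cancel, Nat.mul_div_cancel']
    · ring
    · rw [mul_comm]; exact (Nat.even_mul_succ_self n).two_dvd
  have h1 := h (a + b)
  have h2 := h a
  have h3 := h b
  nlinarith

lemma local_dim {a b : ℕ} {u v : MvPolynomial (Fin 2) K} (hu : u ∈ MM ^ a) (hv : v ∈ MM ^ b)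
    (hV0 : hc b v ≠ 0) (hUV : IsRelPrime (hc a u) (hc b v)) :
    Module.Finite K (MvPolynomial (Fin 2) K ⧸ (Ideal.span {u, v} ⊔ MM ^ (a + b))) ∧
    Module.finrank K (MvPolynomial (Fin 2) K ⧸ (Ideal.span {u, v} ⊔ MM ^ (a + b))) ≤ a * b := by
  set J := Ideal.span {u, v} ⊔ MM ^ (a + b) with hJ
  let π : DD K (a + b) →ₗ[K] (MvPolynomial (Fin 2) K ⧸ J) :=
    (Ideal.Quotient.mkₐ K J).toLinearMap ∘ₗ (DD K (a + b)).subtype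
  have hπ : Function.Surjective π := by
    intro y
    obtain ⟨p, rfl⟩ := Ideal.Quotient.mk_surjective y
    refine ⟨⟨trc K (a + b) p, trc_mem _ _⟩, ?_⟩
    change Ideal.Quotient.mk J _ = Ideal.Quotient.mk J _
    symm
    rw [Ideal.Quotient.eq]
    exact Ideal.mem_sup_right (sub_trc_mem _ _)
  have hfin : Module.Finite K (MvPolynomial (Fin 2) K ⧸ J) := Module.Finite.of_surjective π hπ
  refine ⟨hfin, ?_⟩
  let ψ0 : (DD K b × DD K a) →ₗ[K] MvPolynomial (Fin 2) K :=
    (LinearMap.mulRight K u ∘ₗ (DD K b).subtype).coprod (LinearMap.mulRight K v ∘ₗ (DD K a).subtype)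
  have hψ0 : ∀ x, ψ0 x = x.1.1 * u + x.2.1 * v := by
    intro x; simp [ψ0]
  let ψ1 : (DD K b × DD K a) →ₗ[K] DD K (a + b) :=
    LinearMap.codRestrict (DD K (a + b)) (trc K (a + b) ∘ₗ ψ0) (fun x => trc_mem _ _)
  have hψ1 : ∀ x, π (ψ1 x) = 0 := by
    intro x
    change Ideal.Quotient.mk J (trc K (a + b) (ψ0 x)) = 0
    rw [Ideal.Quotient.eq_zero_iff_mem]
    have h1 : ψ0 x ∈ J := by
      rw [hψ0]
      exact Ideal.mem_sup_left (Ideal.mem_span_pair.2 ⟨_, _, rfl⟩)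
    have h2 : ψ0 x - trc K (a + b) (ψ0 x) ∈ J := Ideal.mem_sup_right (sub_trc_mem _ _)
    have := J.sub_mem h1 h2
    simpa using this
  let ψ : (DD K b × DD K a) →ₗ[K] LinearMap.ker π := LinearMap.codRestrict _ ψ1 hψ1
  have hψ : Function.Injective ψ := by
    refine (injective_iff_map_eq_zero _).2 ?_
    intro x hx
    have h1 : trc K (a + b) (ψ0 x) = 0 := by
      have := congrArg (fun y => ((y : LinearMap.ker π) : DD K (a+b)).1) hx
      exact this
    have h2 := sub_trc_mem (a + b) (ψ0 x)
    rw [h1, sub_zero, hψ0] at h2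
    obtain ⟨h3, h4⟩ := local_inj hu hv hV0 hUV x.1.2 x.2.2 h2
    ext1
    · exact Subtype.ext h3
    · exact Subtype.ext h4
  have e1 := LinearMap.finrank_range_add_finrank_ker π
  rw [LinearMap.range_eq_top.2 hπ, finrank_top, finrank_DD, choose_id] at e1
  have e2 := LinearMap.finrank_le_finrank_of_injective hψ
  rw [Module.finrank_prod, finrank_DD, finrank_DD] at e2
  omega

lemma stab_ind {I : Ideal (MvPolynomial (Fin 2) K)} {m : ℕ} (h : MM ^ m ≤ I ⊔ MM ^ (m + 1)) (j : ℕ) :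
    MM ^ m ≤ I ⊔ MM ^ (m + j) := by
  induction j with
  | zero => exact le_sup_right
  | succ j ih =>
    refine ih.trans (sup_le le_sup_left ?_)
    calc MM ^ (m + j) = MM ^ m * MM ^ j := pow_add _ _ _
      _ ≤ (I ⊔ MM ^ (m + 1)) * MM ^ j := Ideal.mul_mono_left h
      _ = I * MM ^ j ⊔ MM ^ (m + 1) * MM ^ j := Ideal.sup_mul _ _ _
      _ ≤ I ⊔ MM ^ (m + (j + 1)) := by
        refine sup_le_sup Ideal.mul_le_left (le_of_eq ?_)
        rw [← pow_add]; congr 1; ring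

lemma sub_hc_mem {a : ℕ} {u : MvPolynomial (Fin 2) K} (hu : u ∈ MM ^ a) :
    u - hc a u ∈ MM ^ (a + 1) := by
  rw [mem_MM'] at hu ⊢
  intro n hn
  rw [map_sub, hc_hc]
  split_ifs with h
  · rw [h, sub_self]
  · rw [hu n (by omega), sub_zero]

lemma homog_mem {n : ℕ} {u : MvPolynomial (Fin 2) K} (hu : u.IsHomogeneous n) : u ∈ MM ^ n := by
  rw [mem_MM']
  intro m hm
  rw [homogeneousComponent_of_mem hu, if_neg (by omega)]

lemma unit_case {u : MvPolynomial (Fin 2) K} (h : hc 0 u ≠ 0) {I : Ideal (MvPolynomial (Fin 2) K)}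
    (hI : u ∈ I) : MM ^ 0 ≤ I ⊔ MM ^ 1 := by
  have h1 : u - hc 0 u ∈ MM ^ 1 := sub_hc_mem (a := 0) (by simp)
  rw [homogeneousComponent_zero] at h h1
  have h2 : C (coeff 0 u) ∈ I ⊔ MM ^ 1 := by
    have := Ideal.sub_mem _ (Ideal.mem_sup_left (T := MM ^ 1) hI) (Ideal.mem_sup_right (S := I) h1)
    simpa using this
  have h3 : coeff 0 u ≠ 0 := by intro h4; apply h; rw [h4, C_0]
  have h4 : (1 : MvPolynomial (Fin 2) K) ∈ I ⊔ MM ^ 1 := by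
    have := Ideal.mul_mem_left _ (C (coeff 0 u)⁻¹) h2
    rwa [← C_mul, inv_mul_cancel₀ h3, C_1] at this
  rw [(Ideal.eq_top_iff_one _).2 h4]
  exact le_top

lemma stab {a b : ℕ} {u v : MvPolynomial (Fin 2) K} (hu : u ∈ MM ^ a) (hv : v ∈ MM ^ b)
    (hU0 : hc a u ≠ 0) (hV0 : hc b v ≠ 0) (hUV : IsRelPrime (hc a u) (hc b v)) (k : ℕ) :
    MM ^ (a + b) ≤ Ideal.span {u, v} ⊔ MM ^ k := by
  have main : ∃ m, m ≤ a + b ∧ MM ^ m ≤ Ideal.span {u, v} ⊔ MM ^ (m + 1) := by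
    rcases Nat.eq_zero_or_pos a with rfl | ha
    · exact ⟨0, by omega, unit_case hU0 (Ideal.subset_span (by simp))⟩
    rcases Nat.eq_zero_or_pos b with rfl | hb
    · exact ⟨0, by omega, unit_case hV0 (Ideal.subset_span (by simp))⟩
    refine ⟨a + b - 1, by omega, ?_⟩
    obtain ⟨a, rfl⟩ : ∃ a', a = a' + 1 := ⟨a - 1, by omega⟩
    obtain ⟨b, rfl⟩ : ∃ b', b = b' + 1 := ⟨b - 1, by omega⟩
    set U := hc (a + 1) u with hU
    set V := hc (b + 1) v with hV
    have hUh : U.IsHomogeneous (a + 1) := homogeneousComponent_isHomogeneous _ _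
    have hVh : V.IsHomogeneous (b + 1) := homogeneousComponent_isHomogeneous _ _
    let ψ0 : (EE K b × EE K a) →ₗ[K] MvPolynomial (Fin 2) K :=
      (LinearMap.mulRight K U ∘ₗ (EE K b).subtype).coprod
        (LinearMap.mulRight K V ∘ₗ (EE K a).subtype)
    have hψ0 : ∀ x, ψ0 x = x.1.1 * U + x.2.1 * V := by
      intro x; simp [ψ0]
    have hψE : ∀ x, ψ0 x ∈ EE K (a + b + 1) := by
      intro x
      rw [mem_EE, hψ0]
      refine IsHomogeneous.add ?_ ?_
      · convert! (mem_EE.1 x.1.2).mul hUh using 1; ring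
      · convert! (mem_EE.1 x.2.2).mul hVh using 1
    let ψ : (EE K b × EE K a) →ₗ[K] EE K (a + b + 1) := LinearMap.codRestrict _ ψ0 hψE
    have hinj : Function.Injective ψ := by
      refine (injective_iff_map_eq_zero _).2 ?_
      intro x hx
      have h1 : x.1.1 * U + x.2.1 * V = 0 := by
        rw [← hψ0]
        exact congrArg Subtype.val hx
      obtain ⟨h3, h4⟩ := relprime_zero (a := a) hVh hV0 hUV (mem_EE.1 x.1.2) (by omega) h1
      ext1
      · exact Subtype.ext h3
      · exact Subtype.ext h4
    have hsurj : Function.Surjective ψ := by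
      refine (LinearMap.injective_iff_surjective_of_finrank_eq_finrank ?_).1 hinj
      rw [Module.finrank_prod, finrank_EE, finrank_EE, finrank_EE]; ring
    rw [show a + 1 + (b + 1) - 1 = a + b + 1 by omega]
    conv_lhs => rw [pow_idealOfVars_eq_span]
    rw [Ideal.span_le]
    rintro _ ⟨s, hs, rfl⟩
    have hs' : s.degree = a + b + 1 := hs
    have hE : monomial s (1 : K) ∈ EE K (a + b + 1) := by
      rw [mem_EE]; exact isHomogeneous_monomial _ hs'
    obtain ⟨x, hx⟩ := hsurj ⟨_, hE⟩
    have hx' : x.1.1 * U + x.2.1 * V = monomial s (1 : K) := by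
      rw [← hψ0]; exact congrArg Subtype.val hx
    change monomial s (1 : K) ∈ _
    rw [← hx']
    have e : x.1.1 * U + x.2.1 * V = (x.1.1 * u + x.2.1 * v)
        - (x.1.1 * (u - U) + x.2.1 * (v - V)) := by ring
    rw [e]
    refine Ideal.sub_mem _ (Ideal.mem_sup_left (Ideal.mem_span_pair.2 ⟨_, _, rfl⟩))
      (Ideal.mem_sup_right (Ideal.add_mem _ ?_ ?_))
    · have := Ideal.mul_mem_mul (homog_mem (mem_EE.1 x.1.2)) (sub_hc_mem hu)
      rw [← pow_add] at this
      convert this using 2; ring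
    · have := Ideal.mul_mem_mul (homog_mem (mem_EE.1 x.2.2)) (sub_hc_mem hv)
      rw [← pow_add] at this
      convert this using 2; ring
  obtain ⟨m, hm, h⟩ := main
  calc MM ^ (a + b) ≤ MM ^ m := Ideal.pow_le_pow_right hm
    _ ≤ _ := stab_ind h k
    _ ≤ _ := sup_le_sup le_rfl (Ideal.pow_le_pow_right (by omega))


lemma hc_mul_hom {k b : ℕ} {e V : MvPolynomial (Fin 2) K} (hV : V.IsHomogeneous b) :
    hc (k + b) (e * V) = hc k e * V := by
  rw [hc_mul, Finset.sum_eq_single (k, b)]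
  · rw [homogeneousComponent_eq_self hV]
  · rintro ⟨i, j⟩ hij hne
    rw [Finset.HasAntidiagonal.mem_antidiagonal] at hij
    simp only [ne_eq, Prod.mk.injEq] at hij hne ⊢
    rw [homogeneousComponent_of_mem hV, if_neg (by omega), mul_zero]
  · intro hh; exfalso; apply hh; rw [Finset.HasAntidiagonal.mem_antidiagonal]

lemma DD_mul {k a : ℕ} {c u : MvPolynomial (Fin 2) K} (hu : u ∈ DD K (a + 1))
    (hcc : c ∈ DD K (k + 1)) : c * u ∈ DD K (k + a + 1) := by
  rw [mem_DD'] at hu hcc ⊢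
  intro n hn
  rw [hc_mul]
  apply Finset.sum_eq_zero
  rintro ⟨i, j⟩ hij
  rw [Finset.HasAntidiagonal.mem_antidiagonal] at hij
  simp only at hij ⊢
  by_cases hj : a + 1 ≤ j
  · rw [hu j hj, mul_zero]
  · rw [hcc i (by omega), zero_mul]

lemma DD_mono {a b : ℕ} (h : a ≤ b) : DD K a ≤ DD K b := by
  intro x hx
  rw [mem_DD'] at hx ⊢
  exact fun n hn => hx n (by omega)

lemma DD_step {a : ℕ} {u : MvPolynomial (Fin 2) K} (hu : u ∈ DD K (a + 1)) (h : hc a u = 0) :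
    u ∈ DD K a := by
  rw [mem_DD'] at hu ⊢
  intro n hn
  rcases Nat.eq_or_lt_of_le hn with rfl | h1
  · exact h
  · exact hu n h1

lemma top_desc {du dv : ℕ} {u v : MvPolynomial (Fin 2) K} (hu : u ∈ DD K (du + 1))
    (hv : v ∈ DD K (dv + 1)) (hV0 : hc dv v ≠ 0) (hUV : IsRelPrime (hc du u) (hc dv v)) (k : ℕ) :
    ∀ a b, a ∈ DD K (dv + k) → b ∈ DD K (du + k) → a * u + b * v ∈ DD K (du + dv) →
    ∃ a' ∈ DD K dv, ∃ b' ∈ DD K du, a' * u + b' * v = a * u + b * v := by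
  induction k with
  | zero => intro a b ha hb _; exact ⟨a, ha, b, hb, rfl⟩
  | succ k ih =>
    intro a b ha hb hab
    have h1 := mem_DD'.1 hab (dv + k + du) (by omega)
    rw [map_add, hc_mul_top (k := dv + k) hu ha, show dv + k + du = du + k + dv by ring, hc_mul_top (k := du + k) hv hb] at h1
    have h2 : hc dv v ∣ hc (dv + k) a := by
      apply hUV.symm.dvd_of_dvd_mul_right (z := hc du u)
      exact ⟨-hc (du + k) b, by linear_combination h1⟩
    obtain ⟨e, he⟩ := h2
    have hVh : (hc dv v).IsHomogeneous dv := homogeneousComponent_isHomogeneous _ _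
    have h3 : hc (dv + k) a = hc k e * hc dv v := by
      rw [← hc_mul_hom hVh, mul_comm e, ← he, hc_hc, if_pos (by ring)]
    set e' := hc k e with he'
    have h4 : hc (du + k) b = - (e' * hc du u) := by
      rw [h3] at h1
      have : hc dv v * (hc (du + k) b + e' * hc du u) = 0 := by linear_combination h1
      rcases mul_eq_zero.1 this with h | h
      · exact absurd h hV0
      · linear_combination h
    have hek : e' ∈ DD K (k + 1) := by
      rw [mem_DD']
      intro n hn
      rw [he', hc_hc, if_neg (by omega)]
    have hee : hc k e' = e' := by rw [he', hc_hc, if_pos rfl]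
    have ha' : a - e' * v ∈ DD K (dv + k) := by
      refine DD_step (Submodule.sub_mem _ ha (DD_mono (by omega) (DD_mul hv hek))) ?_
      rw [map_sub, h3, add_comm dv k, hc_mul_top hv hek, hee, sub_self]
    have hb' : b + e' * u ∈ DD K (du + k) := by
      refine DD_step (Submodule.add_mem _ hb (DD_mono (by omega) (DD_mul hu hek))) ?_
      rw [map_add, h4, add_comm du k, hc_mul_top hu hek, hee]; ring
    have e1 : (a - e' * v) * u + (b + e' * u) * v = a * u + b * v := by ring
    obtain ⟨a', h5, b', h6, h7⟩ := ih _ _ ha' hb' (by rw [e1]; exact hab)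
    exact ⟨a', h5, b', h6, h7.trans e1⟩

lemma exists_DD (p : MvPolynomial (Fin 2) K) : ∃ k, p ∈ DD K k := by
  refine ⟨p.totalDegree + 1, ?_⟩
  rw [mem_DD']
  intro n hn
  exact homogeneousComponent_eq_zero _ _ (by omega)

/-- translation -/
noncomputable def tr (P : Fin 2 → K) : MvPolynomial (Fin 2) K →ₐ[K] MvPolynomial (Fin 2) K :=
  aeval (fun i => X i + C (P i))

lemma tr_tr (P : Fin 2 → K) (h : MvPolynomial (Fin 2) K) : tr (-P) (tr P h) = h := by
  have : (tr (-P)).comp (tr P) = AlgHom.id K _ := by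
    ext i : 1
    simp [tr, algHom_C]
  exact DFunLike.congr_fun this h

/-- local data of an ordinary intersection -/
def LocData (u v : MvPolynomial (Fin 2) K) (P : Fin 2 → K) (a b : ℕ) : Prop :=
  tr P u ∈ idealOfVars (Fin 2) K ^ a ∧ tr P v ∈ idealOfVars (Fin 2) K ^ b ∧
  homogeneousComponent a (tr P u) ≠ 0 ∧ homogeneousComponent b (tr P v) ≠ 0 ∧
  IsRelPrime (homogeneousComponent a (tr P u)) (homogeneousComponent b (tr P v))

/-- the ideal of a point -/
noncomputable def NN (P : Fin 2 → K) : Ideal (MvPolynomial (Fin 2) K) :=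
  (idealOfVars (Fin 2) K).map (tr (-P))

lemma loc_mem {u v h : MvPolynomial (Fin 2) K} {P : Fin 2 → K} {a b : ℕ} (hL : LocData u v P a b)
    (hh : tr P h ∈ Ideal.span {tr P u, tr P v} ⊔ MM ^ (a + b)) (k : ℕ) :
    h ∈ Ideal.span {u, v} ⊔ NN P ^ k := by
  obtain ⟨h1, h2, h3, h4, h5⟩ := hL
  have h6 : tr P h ∈ Ideal.span {tr P u, tr P v} ⊔ MM ^ k :=
    (sup_le le_sup_left (stab h1 h2 h3 h4 h5 k)) hh
  have h7 := Ideal.mem_map_of_mem (tr (-P)) h6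
  rw [tr_tr, Ideal.map_sup, Ideal.map_span, Ideal.map_pow, Set.image_pair, tr_tr, tr_tr] at h7
  exact h7

lemma X_mem_NN (P : Fin 2 → K) (i : Fin 2) : X i - C (P i) ∈ NN P := by
  have : tr (-P) (X i) ∈ NN P :=
    Ideal.mem_map_of_mem _ (Ideal.subset_span ⟨i, rfl⟩)
  simpa [tr, sub_eq_add_neg] using this

lemma NN_coprime {P Q : Fin 2 → K} (h : P ≠ Q) : IsCoprime (NN P) (NN Q) := by
  obtain ⟨i, hi⟩ := Function.ne_iff.1 h
  rw [Ideal.isCoprime_iff_exists]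
  have hne : Q i - P i ≠ 0 := sub_ne_zero.2 (Ne.symm hi)
  refine ⟨C (Q i - P i)⁻¹ * (X i - C (P i)), Ideal.mul_mem_left _ _ (X_mem_NN P i),
    - (C (Q i - P i)⁻¹ * (X i - C (Q i))),
    (Ideal.neg_mem_iff _).2 (Ideal.mul_mem_left _ _ (X_mem_NN Q i)), ?_⟩
  have : C (Q i - P i)⁻¹ * (C (Q i) - C (P i)) = (1 : MvPolynomial (Fin 2) K) := by
    rw [← C_sub, ← C_mul, inv_mul_cancel₀ hne, C_1]
  linear_combination this

lemma NN_eval {P : Fin 2 → K} {h : MvPolynomial (Fin 2) K} (hh : h ∈ NN P) : aeval P h = 0 := by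
  have : NN P ≤ RingHom.ker (aeval P : MvPolynomial (Fin 2) K →ₐ[K] K) := by
    rw [NN, Ideal.map_span, Ideal.span_le]
    rintro _ ⟨_, ⟨i, rfl⟩, rfl⟩
    simp [tr, RingHom.mem_ker]
  exact this hh

lemma prod_sup_le {ι R : Type*} [CommRing R] (s : Finset ι) (I : Ideal R) (N : ι → Ideal R) :
    ∏ i ∈ s, (I ⊔ N i) ≤ I ⊔ ∏ i ∈ s, N i := by
  classical
  induction s using Finset.induction with
  | empty => simp
  | insert a s ha ih =>
    rw [Finset.prod_insert ha, Finset.prod_insert ha]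
    refine (Ideal.mul_mono_right ih).trans ?_
    rw [Ideal.sup_mul, Ideal.mul_sup, Ideal.mul_sup]
    refine sup_le (sup_le ?_ ?_) (sup_le ?_ le_sup_right)
    · exact Ideal.mul_le_left.trans le_sup_left
    · exact Ideal.mul_le_left.trans le_sup_left
    · exact Ideal.mul_le_right.trans le_sup_left

lemma glob_mem [IsAlgClosed K] {u v h : MvPolynomial (Fin 2) K} (S : Finset (Fin 2 → K))
    (a b : (Fin 2 → K) → ℕ) (hS : ∀ P, eval P u = 0 → eval P v = 0 → P ∈ S)
    (hL : ∀ P ∈ S, LocData u v P (a P) (b P))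
    (hh : ∀ P ∈ S, tr P h ∈ Ideal.span {tr P u, tr P v} ⊔ MM ^ (a P + b P)) :
    h ∈ Ideal.span {u, v} := by
  set I := Ideal.span {u, v} with hI
  have h1 : ∏ P ∈ S, NN P ≤ I.radical := by
    rw [← vanishingIdeal_zeroLocus_eq_radical (K := K)]
    intro p hp x hx
    have hxS : x ∈ S := by
      apply hS
      · simpa using hx u (Ideal.subset_span (by simp))
      · simpa using hx v (Ideal.subset_span (by simp))
    have : p ∈ NN x := Ideal.le_of_dvd (Finset.dvd_prod_of_mem _ hxS) hp
    exact NN_eval this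
  obtain ⟨k, hk⟩ := Ideal.exists_pow_le_of_le_radical_of_fg h1 (IsNoetherian.noetherian _)
  rw [← Finset.prod_pow] at hk
  have h2 : h ∈ ⨅ P ∈ S, (I ⊔ NN P ^ k) := by
    simp only [Submodule.mem_iInf]
    intro P hP
    exact loc_mem (hL P hP) (hh P hP) k
  rw [← Ideal.prod_eq_iInf_of_pairwise_isCoprime] at h2
  · have := prod_sup_le _ _ _ h2
    exact (sup_le le_rfl hk) this
  · intro P _ Q _ hPQ
    have := (NN_coprime hPQ).pow (m := k) (n := k)
    rw [Function.onFun, Ideal.isCoprime_iff_sup_eq] at *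
    rw [eq_top_iff, ← this]
    exact sup_le_sup le_sup_right le_sup_right

theorem bezout_le [IsAlgClosed K] {u v : MvPolynomial (Fin 2) K} (S : Finset (Fin 2 → K))
    (a b : (Fin 2 → K) → ℕ) (hS : ∀ P, eval P u = 0 → eval P v = 0 → P ∈ S)
    (hL : ∀ P ∈ S, LocData u v P (a P) (b P)) {du dv : ℕ}
    (hu : u ∈ DD K (du + 1)) (hv : v ∈ DD K (dv + 1)) (hV0 : hc dv v ≠ 0)
    (hUV : IsRelPrime (hc du u) (hc dv v)) :
    du * dv ≤ ∑ P ∈ S, a P * b P := by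
  let J : S → Ideal (MvPolynomial (Fin 2) K) := fun P =>
    Ideal.span {tr P.1 u, tr P.1 v} ⊔ MM ^ (a P + b P)
  have hJ : ∀ P : S, Module.Finite K (MvPolynomial (Fin 2) K ⧸ J P) ∧
      Module.finrank K (MvPolynomial (Fin 2) K ⧸ J P) ≤ a P * b P := fun P => by
    obtain ⟨h1, h2, h3, h4, h5⟩ := hL P.1 P.2
    exact local_dim h1 h2 h4 h5
  have hJf := fun P => (hJ P).1
  let π : DD K (du + dv) →ₗ[K] (∀ P : S, MvPolynomial (Fin 2) K ⧸ J P) :=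
    LinearMap.pi fun P => (Ideal.Quotient.mkₐ K (J P)).toLinearMap ∘ₗ (tr P.1).toLinearMap ∘ₗ
      (DD K (du + dv)).subtype
  let ψ : (DD K dv × DD K du) →ₗ[K] MvPolynomial (Fin 2) K :=
    (LinearMap.mulRight K u ∘ₗ (DD K dv).subtype).coprod
      (LinearMap.mulRight K v ∘ₗ (DD K du).subtype)
  have hψ : ∀ x, ψ x = x.1.1 * u + x.2.1 * v := by
    intro x; simp [ψ]
  have hker : (LinearMap.ker π).map (DD K (du + dv)).subtype ≤ LinearMap.range ψ := by
    rintro _ ⟨h, hh, rfl⟩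
    have h1 : h.1 ∈ Ideal.span {u, v} := by
      refine glob_mem S a b hS hL ?_
      intro P hP
      have := congrFun (LinearMap.mem_ker.1 hh) ⟨P, hP⟩
      exact Ideal.Quotient.eq_zero_iff_mem.1 this
    obtain ⟨c, d, hcd⟩ := Ideal.mem_span_pair.1 h1
    obtain ⟨k1, hk1⟩ := exists_DD c
    obtain ⟨k2, hk2⟩ := exists_DD d
    obtain ⟨c', h3, d', h4, h5⟩ := top_desc hu hv hV0 hUV (k1 + k2) c d
      (DD_mono (by omega) hk1) (DD_mono (by omega) hk2) (by rw [hcd]; exact h.2)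
    refine ⟨(⟨c', h3⟩, ⟨d', h4⟩), ?_⟩
    rw [hψ]
    exact h5.trans hcd
  have e1 := LinearMap.finrank_range_add_finrank_ker π
  rw [finrank_DD, choose_id] at e1
  have e2 : Module.finrank K (LinearMap.range π) ≤ ∑ P ∈ S, a P * b P := by
    refine (Submodule.finrank_le _).trans ?_
    rw [Module.finrank_pi_fintype, ← Finset.sum_coe_sort S]
    exact Finset.sum_le_sum fun P _ => (hJ P).2
  have e3 : Module.finrank K (LinearMap.ker π) ≤ (dv + 1).choose 2 + (du + 1).choose 2 := by
    calc Module.finrank K (LinearMap.ker π)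
        = Module.finrank K ((LinearMap.ker π).map (DD K (du + dv)).subtype) :=
          (LinearEquiv.finrank_eq (Submodule.equivMapOfInjective _ (Submodule.subtype_injective _) _))
      _ ≤ Module.finrank K (LinearMap.range ψ) := Submodule.finrank_mono hker
      _ ≤ Module.finrank K (DD K dv × DD K du) := LinearMap.finrank_range_le _
      _ = _ := by rw [Module.finrank_prod, finrank_DD, finrank_DD]
  omega

lemma exists_order {u : MvPolynomial (Fin 2) K} (h : u ≠ 0) : ∃ a, u ∈ MM ^ a ∧ hc a u ≠ 0 := by
  classical
  have h1 : ∃ n, hc n u ≠ 0 := by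
    by_contra hh
    push Not at hh
    exact h (ext_hc hh)
  refine ⟨Nat.find h1, ?_, Nat.find_spec h1⟩
  rw [mem_MM']
  intro n hn
  simpa using Nat.find_min h1 hn

lemma order_split {m : ℕ} {f u v : MvPolynomial (Fin 2) K} (hf : f = u * v) (hF : f ∈ MM ^ m)
    (hF0 : hc m f ≠ 0) : ∃ a b, a + b = m ∧ u ∈ MM ^ a ∧ v ∈ MM ^ b ∧ hc a u ≠ 0 ∧ hc b v ≠ 0 ∧
      hc a u * hc b v = hc m f := by
  have hf0 : f ≠ 0 := by rintro h; simp [h] at hF0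
  have hu0 : u ≠ 0 := by rintro rfl; simp at hf; exact hf0 hf
  have hv0 : v ≠ 0 := by rintro rfl; simp at hf; exact hf0 hf
  obtain ⟨a, ha, ha0⟩ := exists_order hu0
  obtain ⟨b, hb, hb0⟩ := exists_order hv0
  have key : hc (a + b) f = hc a u * hc b v := by
    rw [hf, hc_mul_low hb (fun i hi => mem_MM'.1 ha i (by omega)), if_pos (by omega)]
    simp
  have hmem : f ∈ MM ^ (a + b) := by
    rw [hf, pow_add]; exact Ideal.mul_mem_mul ha hb
  have hab : a + b = m := by
    rcases lt_trichotomy (a + b) m with h | h | h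
    · exact absurd (key.symm.trans (mem_MM'.1 hF _ h)) (mul_ne_zero ha0 hb0)
    · exact h
    · exact absurd (mem_MM'.1 hmem _ h) hF0
  exact ⟨a, b, hab, ha, hb, ha0, hb0, by rw [← key, hab]⟩

lemma not_dvd_XX {p : MvPolynomial (Fin 2) K} (hp : Prime p) (h0 : p ∣ X 0) (h1 : p ∣ X 1) : False := by
  have hx : Prime (X 0 : MvPolynomial (Fin 2) K) := X_prime
  have h2 := (hp.irreducible.dvd_irreducible_iff_associated hx.irreducible).1 h0
  have h3 : (X 0 : MvPolynomial (Fin 2) K) ∣ X 1 := h2.symm.dvd.trans h1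
  rw [X_dvd_X] at h3
  simp at h3

lemma relprime_of {U V : MvPolynomial (Fin 2) K} (h0 : U * V ≠ 0)
    (h : ∀ p, Prime p → p ∣ U → p ∣ V → p ∣ X 0 ∧ p ∣ X 1) : IsRelPrime U V := by
  apply WfDvdMonoid.isRelPrime_of_no_irreducible_factors
  · rintro ⟨rfl, -⟩; simp at h0
  · intro p hp hU hV
    obtain ⟨h1, h2⟩ := h p hp.prime hU hV
    exact not_dvd_XX hp.prime h1 h2

lemma dvd_pderiv {p U V : MvPolynomial (Fin 2) K} (hU : p ∣ U) (hV : p ∣ V) (i : Fin 2) :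
    p ∣ pderiv i (U * V) := by
  rw [Derivation.leibniz]
  exact dvd_add (dvd_mul_of_dvd_left hU _) (dvd_mul_of_dvd_left hV _)

noncomputable def FF (q : ℕ) (A B G : K) : MvPolynomial (Fin 2) K :=
  C A * X 0 ^ (q + 1) + C B * X 1 ^ (q + 1) + C G * (X 0 + X 1) ^ (q + 1)

lemma FF_hom (q : ℕ) (A B G : K) : (FF q A B G).IsHomogeneous (q + 1) := by
  unfold FF
  refine IsHomogeneous.add (IsHomogeneous.add ?_ ?_) ?_
  · exact (isHomogeneous_X_pow _ _).C_mul _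
  · exact (isHomogeneous_X_pow _ _).C_mul _
  · apply IsHomogeneous.C_mul
    simpa using ((isHomogeneous_X K (0 : Fin 2)).add (isHomogeneous_X K 1)).pow (q + 1)

lemma FF_pd0 [CharP K 2] {i : ℕ} (hi : 1 ≤ i) (A B G : K) :
    pderiv 0 (FF (2 ^ i) A B G) = C (A + G) * X 0 ^ (2 ^ i) + C G * X 1 ^ (2 ^ i) := by
  have h2 : ((2 : ℕ) : MvPolynomial (Fin 2) K) = 0 := CharP.cast_eq_zero _ 2
  have hq : ((2 : MvPolynomial (Fin 2) K)) ^ i = 0 := by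
    have : (2 : MvPolynomial (Fin 2) K) = 0 := by exact_mod_cast h2
    rw [this, zero_pow (by omega)]
  unfold FF
  simp [hq, add_pow_char_pow]
  ring

lemma FF_pd1 [CharP K 2] {i : ℕ} (hi : 1 ≤ i) (A B G : K) :
    pderiv 1 (FF (2 ^ i) A B G) = C G * X 0 ^ (2 ^ i) + C (B + G) * X 1 ^ (2 ^ i) := by
  have h2 : ((2 : ℕ) : MvPolynomial (Fin 2) K) = 0 := CharP.cast_eq_zero _ 2
  have hq : ((2 : MvPolynomial (Fin 2) K)) ^ i = 0 := by
    have : (2 : MvPolynomial (Fin 2) K) = 0 := by exact_mod_cast h2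
    rw [this, zero_pow (by omega)]
  unfold FF
  simp [hq, add_pow_char_pow]
  ring

lemma FF_key [CharP K 2] {i : ℕ} (hi : 1 ≤ i) {A B G : K} (hD : A * B + A * G + B * G ≠ 0)
    {p : MvPolynomial (Fin 2) K} (hp : Prime p) (h0 : p ∣ pderiv 0 (FF (2 ^ i) A B G))
    (h1 : p ∣ pderiv 1 (FF (2 ^ i) A B G)) : p ∣ X 0 ∧ p ∣ X 1 := by
  rw [FF_pd0 hi] at h0
  rw [FF_pd1 hi] at h1
  have hu : C (A * B + A * G + B * G)⁻¹ * C (A * B + A * G + B * G) = (1 : MvPolynomial (Fin 2) K) := by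
    rw [← C_mul, inv_mul_cancel₀ hD, C_1]
  constructor
  · apply hp.dvd_of_dvd_pow (n := 2 ^ i)
    have := dvd_mul_of_dvd_right (dvd_sub (dvd_mul_of_dvd_right h0 (C (B + G))) (dvd_mul_of_dvd_right h1 (C G)))
       (C (A * B + A * G + B * G)⁻¹)
    convert this using 1
    simp only [C_add, C_mul] at hu ⊢
    linear_combination -X 0 ^ 2 ^ i * hu
  · apply hp.dvd_of_dvd_pow (n := 2 ^ i)
    have := dvd_mul_of_dvd_right (dvd_sub (dvd_mul_of_dvd_right h1 (C (A + G))) (dvd_mul_of_dvd_right h0 (C G)))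
       (C (A * B + A * G + B * G)⁻¹)
    convert this using 1
    simp only [C_add, C_mul] at hu ⊢
    linear_combination -X 1 ^ 2 ^ i * hu

lemma FF_ne [CharP K 2] {i : ℕ} (hi : 1 ≤ i) {A B G : K} (hD : A * B + A * G + B * G ≠ 0) :
    FF (2 ^ i) A B G ≠ 0 := by
  intro h
  have hx : Prime (X 0 : MvPolynomial (Fin 2) K) := X_prime
  have := FF_key hi hD hx (by rw [h]; simp) (by rw [h]; simp)
  exact not_dvd_XX hx this.1 this.2

lemma expand1 [CharP K 2] {i l : ℕ} (hi : 1 ≤ i) (hl : Odd l) {z : MvPolynomial (Fin 2) K} (hz : z ∈ MM)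
    {α : K} (h1 : α ^ l = 1) (h2 : α ^ (2 ^ i) = α) :
    ∃ w ∈ MM ^ (2 ^ i + 2), (z + C α) ^ (2 ^ i * l + 1) =
      z + C α + C (α ^ (l - 1)) * z ^ (2 ^ i + 1) + z ^ (2 ^ i) + w := by
  obtain ⟨k, hk⟩ := Polynomial.powAddExpansion (C α) (z ^ (2 ^ i)) l
  refine ⟨k * (z ^ 2 ^ i) ^ 2 * (z + C α), ?_, ?_⟩
  · apply Ideal.mul_mem_right
    apply Ideal.mul_mem_left
    have h4 : 2 ^ 1 ≤ 2 ^ i := Nat.pow_le_pow_right (by norm_num) hi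
    rw [← pow_mul]
    exact Ideal.pow_le_pow_right (by omega) (Ideal.pow_mem_pow hz _)
  · have hlc : (l : MvPolynomial (Fin 2) K) = 1 := by
      obtain ⟨m, rfl⟩ := hl
      have h2 : ((2 : ℕ) : MvPolynomial (Fin 2) K) = 0 := CharP.cast_eq_zero _ 2
      push_cast at h2 ⊢
      rw [h2]; ring
    have h5 : C α ^ l = (1 : MvPolynomial (Fin 2) K) := by rw [← C_pow, h1, C_1]
    have h6 : C (α ^ (l - 1)) * C α = (1 : MvPolynomial (Fin 2) K) := by
      rw [← C_mul, ← pow_succ, Nat.sub_add_cancel hl.pos, h1, C_1]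
    rw [pow_succ, pow_mul, add_pow_char_pow, ← C_pow, h2, add_comm (z ^ 2 ^ i), hk, hlc, h5, ← C_pow]
    linear_combination z ^ 2 ^ i * h6

noncomputable def ff (K : Type*) [Field K] (t : ℕ) : MvPolynomial (Fin 2) K := X 0 ^ t + X 1 ^ t + 1 + (X 0 + X 1 + 1) ^ t

lemma ff_local [CharP K 2] {i l : ℕ} (hi : 1 ≤ i) (hl : Odd l) {P : Fin 2 → K}
    (a1 : P 0 ^ l = 1) (a2 : P 0 ^ (2 ^ i) = P 0) (b1 : P 1 ^ l = 1) (b2 : P 1 ^ (2 ^ i) = P 1)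
    (c1 : (P 0 + P 1 + 1) ^ l = 1) (c2 : (P 0 + P 1 + 1) ^ (2 ^ i) = P 0 + P 1 + 1) :
    ∃ w ∈ MM ^ (2 ^ i + 2), tr P (ff K (2 ^ i * l + 1)) =
      FF (2 ^ i) (P 0 ^ (l - 1)) (P 1 ^ (l - 1)) ((P 0 + P 1 + 1) ^ (l - 1)) + w := by
  have hX : ∀ j : Fin 2, (X j : MvPolynomial (Fin 2) K) ∈ MM := fun j => by
    simpa using homog_mem (isHomogeneous_X K j)
  obtain ⟨w1, hw1, e1⟩ := expand1 hi hl (hX 0) a1 a2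
  obtain ⟨w2, hw2, e2⟩ := expand1 hi hl (hX 1) b1 b2
  obtain ⟨w3, hw3, e3⟩ := expand1 hi hl (add_mem (hX 0) (hX 1)) c1 c2
  refine ⟨w1 + w2 + w3, add_mem (add_mem hw1 hw2) hw3, ?_⟩
  have h2 : (2 : MvPolynomial (Fin 2) K) = 0 := by
    exact_mod_cast (CharP.cast_eq_zero (MvPolynomial (Fin 2) K) 2)
  have e4 : tr P (ff K (2 ^ i * l + 1)) = (X 0 + C (P 0)) ^ (2 ^ i * l + 1) +
      (X 1 + C (P 1)) ^ (2 ^ i * l + 1) + 1 + (X 0 + X 1 + C (P 0 + P 1 + 1)) ^ (2 ^ i * l + 1) := by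
    simp only [ff, tr, map_add, map_pow, aeval_X, map_one]
    congr 2
    ring
  rw [e4, e1, e2, e3, FF, add_pow_char_pow]
  simp only [C_add, C_1]
  linear_combination (X 0 + X 1 + C (P 0) + C (P 1) + 1 + X 0 ^ 2 ^ i + X 1 ^ 2 ^ i) * h2

lemma ff_locdata [CharP K 2] {i l : ℕ} (hi : 1 ≤ i) (hl : Odd l) {P : Fin 2 → K}
    (a1 : P 0 ^ l = 1) (a2 : P 0 ^ (2 ^ i) = P 0) (b1 : P 1 ^ l = 1) (b2 : P 1 ^ (2 ^ i) = P 1)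
    (c1 : (P 0 + P 1 + 1) ^ l = 1) (c2 : (P 0 + P 1 + 1) ^ (2 ^ i) = P 0 + P 1 + 1)
    {u v : MvPolynomial (Fin 2) K} (huv : u * v = ff K (2 ^ i * l + 1)) :
    ∃ a b, a + b = 2 ^ i + 1 ∧ LocData u v P a b := by
  obtain ⟨w, hw, e⟩ := ff_local hi hl a1 a2 b1 b2 c1 c2
  have h2 : (2 : K) = 0 := by exact_mod_cast (CharP.cast_eq_zero K 2)
  have hD : P 0 ^ (l - 1) * P 1 ^ (l - 1) + P 0 ^ (l - 1) * (P 0 + P 1 + 1) ^ (l - 1) +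
      P 1 ^ (l - 1) * (P 0 + P 1 + 1) ^ (l - 1) ≠ 0 := by
    set A := P 0 ^ (l - 1) with hA
    set B := P 1 ^ (l - 1) with hB
    set G := (P 0 + P 1 + 1) ^ (l - 1) with hG
    have hA1 : A * P 0 = 1 := by rw [hA, ← pow_succ, Nat.sub_add_cancel hl.pos, a1]
    have hB1 : B * P 1 = 1 := by rw [hB, ← pow_succ, Nat.sub_add_cancel hl.pos, b1]
    have hG1 : G * (P 0 + P 1 + 1) = 1 := by rw [hG, ← pow_succ, Nat.sub_add_cancel hl.pos, c1]
    intro h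
    apply one_ne_zero (α := K)
    have hA2 : P 0 ≠ 0 := right_ne_zero_of_mul_eq_one hA1
    have hB2 : P 1 ≠ 0 := right_ne_zero_of_mul_eq_one hB1
    have hG2 : P 0 + P 1 + 1 ≠ 0 := right_ne_zero_of_mul_eq_one hG1
    rw [eq_inv_of_mul_eq_one_left hA1, eq_inv_of_mul_eq_one_left hB1, eq_inv_of_mul_eq_one_left hG1] at h
    field_simp at h
    linear_combination h - (P 0 + P 1) * h2
  have hc1 : ∀ n, n < 2 ^ i + 2 → hc n w = 0 := mem_MM'.1 hw
  have htop : hc (2 ^ i + 1) (tr P (ff K (2 ^ i * l + 1))) =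
      FF (2 ^ i) (P 0 ^ (l - 1)) (P 1 ^ (l - 1)) ((P 0 + P 1 + 1) ^ (l - 1)) := by
    rw [e, map_add, hc1 _ (by omega), add_zero, homogeneousComponent_eq_self (FF_hom _ _ _ _)]
  have hmem : tr P (ff K (2 ^ i * l + 1)) ∈ MM ^ (2 ^ i + 1) := by
    rw [e]
    exact add_mem (homog_mem (FF_hom _ _ _ _)) (Ideal.pow_le_pow_right (by omega) hw)
  obtain ⟨a, b, hab, ha, hb, ha0, hb0, hm⟩ := order_split (f := tr P (ff K (2 ^ i * l + 1)))
    (u := tr P u) (v := tr P v) (by rw [← huv, map_mul]) hmem (by rw [htop]; exact FF_ne hi hD)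
  rw [htop] at hm
  refine ⟨a, b, hab, ha, hb, ha0, hb0, relprime_of (mul_ne_zero ha0 hb0) ?_⟩
  intro p hp hU hV
  have d0 := dvd_pderiv hU hV 0
  have d1 := dvd_pderiv hU hV 1
  rw [hm] at d0 d1
  exact FF_key hi hD hp d0 d1

lemma hom_s (n : ℕ) : ((X 0 + X 1 : MvPolynomial (Fin 2) K) ^ n).IsHomogeneous n := by
  simpa using ((isHomogeneous_X K (0 : Fin 2)).add (isHomogeneous_X K 1)).pow n

lemma hc_s (n t : ℕ) : hc n ((X 0 + X 1 + 1 : MvPolynomial (Fin 2) K) ^ t) =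
    C (t.choose n : K) * (X 0 + X 1) ^ n := by
  rw [add_pow, map_sum]
  have : ∀ m, hc n ((X 0 + X 1 : MvPolynomial (Fin 2) K) ^ m * 1 ^ (t - m) * (t.choose m : MvPolynomial (Fin 2) K))
      = if m = n then C (t.choose n : K) * (X 0 + X 1) ^ n else 0 := by
    intro m
    have h1 : (X 0 + X 1 : MvPolynomial (Fin 2) K) ^ m * 1 ^ (t - m) * (t.choose m : MvPolynomial (Fin 2) K)
      = C (t.choose m : K) * (X 0 + X 1) ^ m := by
      rw [one_pow, mul_one, mul_comm]; simp
    rw [h1, homogeneousComponent_of_mem ((hom_s m).C_mul _)]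
    by_cases h : m = n
    · subst h; simp
    · rw [if_neg h, if_neg (by omega)]
  simp only [this]
  rw [Finset.sum_ite_eq']
  split_ifs with h
  · rfl
  · rw [Nat.choose_eq_zero_of_lt (by simpa using h)]; simp

lemma hc_ff {n t : ℕ} (hn : 1 ≤ n) : hc n (ff K t) = (if t = n then X 0 ^ t + X 1 ^ t else 0) +
    C (t.choose n : K) * (X 0 + X 1) ^ n := by
  rw [ff, map_add, hc_s, map_add, map_add, homogeneousComponent_of_mem (isHomogeneous_X_pow (R := K) (0 : Fin 2) t),
    homogeneousComponent_of_mem (isHomogeneous_X_pow (R := K) (1 : Fin 2) t),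
    homogeneousComponent_of_mem (isHomogeneous_one (Fin 2) K), if_neg (show n ≠ 0 by omega)]
  congr 1
  by_cases h : t = n
  · simp [h]
  · simp [h, Ne.symm h]

lemma top_pd0 [CharP K 2] (k : ℕ) : pderiv 0 (X 0 ^ (2 * k + 1) + X 1 ^ (2 * k + 1) +
    (X 0 + X 1) ^ (2 * k + 1) : MvPolynomial (Fin 2) K) = X 0 ^ (2 * k) + (X 0 + X 1) ^ (2 * k) := by
  have h2 : (2 : MvPolynomial (Fin 2) K) = 0 := by
    exact_mod_cast (CharP.cast_eq_zero (MvPolynomial (Fin 2) K) 2)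
  simp [h2]

lemma ff_pd0 [CharP K 2] (k : ℕ) : pderiv 0 (ff K (2 * k + 1)) = X 0 ^ (2 * k) + (X 0 + X 1 + 1) ^ (2 * k) := by
  have h2 : (2 : MvPolynomial (Fin 2) K) = 0 := by
    exact_mod_cast (CharP.cast_eq_zero (MvPolynomial (Fin 2) K) 2)
  simp [ff, h2]

lemma ff_pd1 [CharP K 2] (k : ℕ) : pderiv 1 (ff K (2 * k + 1)) = X 1 ^ (2 * k) + (X 0 + X 1 + 1) ^ (2 * k) := by
  have h2 : (2 : MvPolynomial (Fin 2) K) = 0 := by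
    exact_mod_cast (CharP.cast_eq_zero (MvPolynomial (Fin 2) K) 2)
  simp [ff, h2]

lemma mem_DD_deg (u : MvPolynomial (Fin 2) K) : u ∈ DD K (u.totalDegree + 1) := by
  rw [mem_DD']
  intro n hn
  exact homogeneousComponent_eq_zero _ _ (by omega)

lemma hc_deg_ne {u : MvPolynomial (Fin 2) K} (hu : u ≠ 0) : hc u.totalDegree u ≠ 0 := by
  intro h
  have h1 := mem_DD_deg u
  have h2 := DD_step h1 h
  rw [mem_DD] at h2
  obtain ⟨s, hs, he⟩ := Finset.exists_mem_eq_sup u.support (support_nonempty.2 hu) (fun s => s.sum fun _ e => e)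
  have h3 : u.totalDegree = s.degree := by
    rw [Finsupp.degree_eq_sum]
    unfold totalDegree
    rw [he, Finsupp.sum_fintype _ _ (by simp)]
  exact (mem_support_iff.1 hs) (h2 s h3.le)

lemma top_data [CharP K 2] {k : ℕ} (hk : 1 ≤ k) {u v : MvPolynomial (Fin 2) K} (huv : u * v = ff K (2 * k + 1)) :
    u.totalDegree + v.totalDegree = 2 * k + 1 ∧ hc v.totalDegree v ≠ 0 ∧
    IsRelPrime (hc u.totalDegree u) (hc v.totalDegree v) := by
  have h2 : (2 : K) = 0 := by exact_mod_cast (CharP.cast_eq_zero K 2)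
  have htop : hc (2 * k + 1) (ff K (2 * k + 1)) = X 0 ^ (2 * k + 1) + X 1 ^ (2 * k + 1) +
    (X 0 + X 1) ^ (2 * k + 1) := by rw [hc_ff (by omega)]; simp
  have hsub : hc (2 * k) (ff K (2 * k + 1)) = (X 0 + X 1) ^ (2 * k) := by
    rw [hc_ff (by omega)]; simp [h2]
  have htop0 : hc (2 * k + 1) (ff K (2 * k + 1)) ≠ 0 := by
    intro h
    have h3 := top_pd0 (K := K) k
    rw [← htop, h, map_zero] at h3
    have h4 := congrArg (eval ![0, 1]) h3
    simp [show k ≠ 0 by omega] at h4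
  have hu0 : u ≠ 0 := by rintro rfl; simp [← huv] at htop0
  have hv0 : v ≠ 0 := by rintro rfl; simp [← huv] at htop0
  have hU := hc_deg_ne hu0
  have hV := hc_deg_ne hv0
  have hprod := hc_mul_top (mem_DD_deg v) (mem_DD_deg u)
  have hdeg : u.totalDegree + v.totalDegree = 2 * k + 1 := by
    rcases lt_trichotomy (u.totalDegree + v.totalDegree) (2 * k + 1) with h | h | h
    · have := mem_DD'.1 (DD_mul (mem_DD_deg v) (mem_DD_deg u)) (2 * k + 1) (by omega)
      rw [huv] at this
      exact absurd this htop0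
    · exact h
    · exfalso
      rw [huv, hc_ff (by omega), if_neg (by omega), Nat.choose_eq_zero_of_lt h] at hprod
      simp at hprod
      tauto
  refine ⟨hdeg, hV, relprime_of (mul_ne_zero hU hV) ?_⟩
  intro p hp hpU hpV
  have e1 : p ∣ (X 0 + X 1 : MvPolynomial (Fin 2) K) := by
    apply hp.dvd_of_dvd_pow (n := 2 * k)
    rw [← hsub, ← huv, hc_mul]
    apply Finset.dvd_sum
    rintro ⟨i, j⟩ hij
    rw [Finset.HasAntidiagonal.mem_antidiagonal] at hij
    simp only at hij ⊢
    rcases lt_trichotomy i u.totalDegree with h | h | h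
    · rcases Nat.eq_or_lt_of_le (show v.totalDegree ≤ j by omega) with h' | h'
      · rw [← h']; exact dvd_mul_of_dvd_right hpV _
      · rw [homogeneousComponent_eq_zero _ v (by omega)]; simp
    · rw [h]; exact dvd_mul_of_dvd_left hpU _
    · rw [homogeneousComponent_eq_zero _ u (by omega)]; simp
  have e2 := dvd_pderiv hpU hpV 0
  rw [← hprod, hdeg, huv, htop, top_pd0] at e2
  have e3 : p ∣ X 0 := by
    apply hp.dvd_of_dvd_pow (n := 2 * k)
    exact (dvd_add_left (dvd_pow e1 (by omega))).1 e2
  exact ⟨e3, (dvd_add_right e3).1 e1⟩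

lemma sing_pt [CharP K 2] {i l : ℕ} (hi : 1 ≤ i) (hl : 1 ≤ l) {u v : MvPolynomial (Fin 2) K}
    (huv : u * v = ff K (2 ^ i * l + 1)) (P : Fin 2 → K) (hu : eval P u = 0) (hv : eval P v = 0) :
    P 0 ^ l = 1 ∧ P 1 ^ l = 1 ∧ (P 0 + P 1 + 1) ^ l = 1 := by
  have h2 : (2 : K) = 0 := by exact_mod_cast (CharP.cast_eq_zero K 2)
  have hk : 2 ^ i * l = 2 * (2 ^ (i - 1) * l) := by
    rw [← mul_assoc, ← pow_succ', Nat.sub_add_cancel hi]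
  have d0 : eval P (pderiv 0 (u * v)) = 0 := by rw [Derivation.leibniz]; simp [hu, hv]
  have d1 : eval P (pderiv 1 (u * v)) = 0 := by rw [Derivation.leibniz]; simp [hu, hv]
  have d2 : eval P (u * v) = 0 := by simp [hu]
  rw [huv, hk, ff_pd0, ← hk] at d0
  rw [huv, hk, ff_pd1, ← hk] at d1
  rw [huv, ff] at d2
  simp only [map_add, map_pow, eval_X, map_one, pow_succ, map_mul] at d0 d1 d2
  set c := (P 0 + P 1 + 1) ^ (2 ^ i * l) with hcdef
  have e0 : P 0 ^ (2 ^ i * l) = c := by linear_combination d0 - c * h2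
  have e1 : P 1 ^ (2 ^ i * l) = c := by linear_combination d1 - c * h2
  rw [e0, e1] at d2
  have e2 : c = 1 := by
    have : (P 0 + P 1) * (2 * c) + (1 + c) = 0 := by linear_combination d2
    rw [h2] at this
    linear_combination this - h2
  have inj : ∀ z : K, z ^ (2 ^ i * l) = c → z ^ l = 1 := by
    intro z hz
    rw [e2, mul_comm, pow_mul] at hz
    apply iterateFrobenius_inj K 2 i
    simpa [iterateFrobenius_def] using hz
  exact ⟨inj _ e0, inj _ e1, inj _ hcdef.symm⟩

lemma count_pts [IsAlgClosed K] [CharP K 2] {l : ℕ} (hl : Odd l) :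
    ∃ S : Finset (Fin 2 → K), S.card + l ≤ l ^ 2 + 1 ∧
    ∀ P, P ∈ S ↔ (P 0 ^ l = 1 ∧ P 1 ^ l = 1 ∧ (P 0 + P 1 + 1) ^ l = 1) := by
  classical
  have h2 : (2 : K) = 0 := by exact_mod_cast (CharP.cast_eq_zero K 2)
  have hlc : (l : K) = 1 := by
    obtain ⟨m, rfl⟩ := hl
    push_cast
    rw [h2]; ring
  have : NeZero (l : K) := ⟨by rw [hlc]; exact one_ne_zero⟩
  have : NeZero l := ⟨hl.pos.ne'⟩
  obtain ⟨ζ, hζ⟩ := HasEnoughRootsOfUnity.exists_primitiveRoot K l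
  set μ := Polynomial.nthRootsFinset l (1 : K) with hμ
  have hcard : μ.card = l := hζ.card_nthRootsFinset
  have hmem : ∀ z, z ∈ μ ↔ z ^ l = 1 := fun z => Polynomial.mem_nthRootsFinset hl.pos 1
  set fib : K → Finset K := fun α => μ.filter (fun β => α + β + 1 ∈ μ) with hfib
  have hfibcard : ∀ α, α ≠ 1 → (fib α).card ≤ l - 1 := by
    intro α hα
    by_contra hh
    have h1 : (fib α).card ≤ l := hcard ▸ Finset.card_filter_le _ _
    have h3 : fib α = μ := Finset.eq_of_subset_of_card_le (Finset.filter_subset _ _) (by omega)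
    have h4 : ∀ β ∈ μ, α + β + 1 ∈ μ := by
      intro β hβ
      rw [← h3] at hβ
      exact (Finset.mem_filter.1 hβ).2
    have h5 : ∑ β ∈ μ, (α + β + 1) = ∑ β ∈ μ, β := by
      refine Finset.sum_bij' (fun β _ => α + β + 1) (fun β _ => α + β + 1) h4 h4 ?_ ?_ ?_
      · intro β _; linear_combination (α + 1) * h2
      · intro β _; linear_combination (α + 1) * h2
      · intro β _; rfl
    rw [Finset.sum_add_distrib, Finset.sum_add_distrib, Finset.sum_const, Finset.sum_const, hcard, nsmul_eq_mul, nsmul_eq_mul, hlc] at h5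
    apply hα
    linear_combination h5 - h2
  set T := μ.sigma fib with hT
  refine ⟨T.image (fun p => ![p.1, p.2]), ?_, ?_⟩
  · have h1 : T.card ≤ l + (l - 1) * (l - 1) := by
      rw [hT, Finset.card_sigma]
      have hone : (1 : K) ∈ μ := by rw [hmem]; simp
      rw [← Finset.add_sum_erase _ _ hone]
      apply add_le_add
      · exact hcard ▸ Finset.card_filter_le _ _
      · calc _ ≤ ∑ α ∈ μ.erase 1, (l - 1) := Finset.sum_le_sum (fun α ha => hfibcard α (Finset.ne_of_mem_erase ha))
          _ = _ := by rw [Finset.sum_const, Finset.card_erase_of_mem hone, hcard, smul_eq_mul]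
    have h3 := (Finset.card_image_le (s := T) (f := fun p => ![p.1, p.2]))
    obtain ⟨m, rfl⟩ : ∃ m, l = m + 1 := ⟨l - 1, (Nat.sub_add_cancel hl.pos).symm⟩
    simp only [Nat.add_sub_cancel] at h1
    nlinarith
  · intro P
    simp only [hT, hfib, Finset.mem_image, Finset.mem_sigma, Finset.mem_filter, hmem, Sigma.exists]
    constructor
    · rintro ⟨a, b, ⟨h1, h2, h3⟩, rfl⟩
      exact ⟨h1, h2, h3⟩
    · rintro ⟨h1, h2, h3⟩
      refine ⟨P 0, P 1, ⟨h1, h2, h3⟩, ?_⟩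
      ext j; fin_cases j <;> rfl

lemma final_arith {q l N t : ℕ} (hl : 3 ≤ l) (hq : 2 * l + 1 ≤ q) (hN : N + l ≤ l ^ 2 + 1) (ht : t = q * l + 1)
    (h : t ^ 2 ≤ N * (q + 1) ^ 2 + 9) : False := by
  subst ht
  zify at *
  have h1 : (N : ℤ) * (q + 1) ^ 2 ≤ (l ^ 2 + 1 - l) * (q + 1) ^ 2 :=
    mul_le_mul_of_nonneg_right (by linarith) (by positivity)
  have h3 : ((q : ℤ) * l + 1) ^ 2 - (l ^ 2 - l + 1) * (q + 1) ^ 2 =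
    (l - 1) * ((q + 1) ^ 2 - 2 * (q + 1) * l + l - 1) := by ring
  have h4 : (9 : ℤ) < (q + 1) ^ 2 - 2 * (q + 1) * l + l - 1 := by nlinarith
  nlinarith

lemma main_lemma [IsAlgClosed K] [CharP K 2] {i l : ℕ} (hi : 1 ≤ i) (hl : 3 ≤ l) (hlodd : Odd l)
    (hdvd : l ∣ 2 ^ i - 1) (hne : l ≠ 2 ^ i - 1) {u v : MvPolynomial (Fin 2) K}
    (huv : u * v = ff K (2 ^ i * l + 1)) {e : ℕ} (he : e ≤ 3) (hd : u.totalDegree = v.totalDegree + e) : False := by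
  obtain ⟨S, hcard, hS⟩ := count_pts (K := K) hlodd
  have hk : 2 ^ i * l = 2 * (2 ^ (i - 1) * l) := by
    rw [← mul_assoc, ← pow_succ', Nat.sub_add_cancel hi]
  have hpos : 1 ≤ 2 ^ (i - 1) * l := Nat.mul_pos (by positivity) (by omega)
  obtain ⟨hdeg, hV, hrel⟩ := top_data hpos (by rw [huv, hk])
  have hq1 : 2 ≤ 2 ^ i := by simpa using Nat.pow_le_pow_right (n := 2) (by norm_num) hi
  have hfrob : ∀ z : K, z ^ l = 1 → z ^ 2 ^ i = z := by
    intro z hz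
    obtain ⟨m, hm⟩ := hdvd
    rw [show 2 ^ i = l * m + 1 by omega, pow_succ, pow_mul, hz, one_pow, one_mul]
  have hloc : ∀ P, ∃ a b, P ∈ S → a + b = 2 ^ i + 1 ∧ LocData u v P a b := by
    intro P
    by_cases hP : P ∈ S
    · obtain ⟨h1, h2, h3⟩ := (hS P).1 hP
      obtain ⟨a, b, hab⟩ := ff_locdata hi hlodd h1 (hfrob _ h1) h2 (hfrob _ h2) h3 (hfrob _ h3) huv
      exact ⟨a, b, fun _ => hab⟩
    · exact ⟨0, 0, fun h => absurd h hP⟩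
  choose a b hab using hloc
  have hb := bezout_le S a b (fun P h1 h2 => (hS P).2 (sing_pt hi (by omega) huv P h1 h2))
    (fun P hP => (hab P hP).2) (mem_DD_deg u) (mem_DD_deg v) hV hrel
  have hsum : 4 * ∑ P ∈ S, a P * b P ≤ S.card * (2 ^ i + 1) ^ 2 := by
    rw [Finset.mul_sum, ← smul_eq_mul, ← Finset.sum_const]
    apply Finset.sum_le_sum
    intro P hP
    rw [← (hab P hP).1]
    have := four_mul_le_sq_add (a P : ℤ) (b P)
    zify; linarith
  rw [← hk] at hdeg
  have hq : 2 * l + 1 ≤ 2 ^ i := by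
    obtain ⟨m, hm⟩ := hdvd
    have : m ≠ 0 := by rintro rfl; omega
    have : m ≠ 1 := by rintro rfl; omega
    have : l * 2 ≤ l * m := Nat.mul_le_mul_left _ (by omega)
    omega
  refine final_arith hl hq hcard rfl (?_ : (2 ^ i * l + 1) ^ 2 ≤ _)
  rw [← hdeg]
  generalize (∑ P ∈ S, a P * b P) = s at *
  rw [hd] at hb ⊢
  nlinarith

end

/-- If `t = 2^i ℓ + 1` with `ℓ ∣ 2^i - 1`, `ℓ ≠ 2^i - 1`, and `g_t` is irreducible over
`𝔽₂`, then `g_t` does not split over the algebraic closure of `𝔽₂` into two nonconstant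
factors of equal degree. -/
theorem stmt_14 (i l t : ℕ) (hi : 1 ≤ i) (hl : 3 ≤ l) (hlodd : Odd l)
    (ht : t = 2 ^ i * l + 1) (hdvd : l ∣ 2 ^ i - 1) (hne : l ≠ 2 ^ i - 1)
    (g : MvPolynomial (Fin 2) (ZMod 2))
    (hg : (X 0 + 1) * (X 1 + 1) * (X 0 + X 1) * g =
      X 0 ^ t + X 1 ^ t + 1 + (X 0 + X 1 + 1) ^ t)
    (hirr : Irreducible g) :
    ¬ ∃ g₁ g₂ : MvPolynomial (Fin 2) (AlgebraicClosure (ZMod 2)),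
      MvPolynomial.map (algebraMap (ZMod 2) (AlgebraicClosure (ZMod 2))) g = g₁ * g₂ ∧
      g₁.totalDegree = g₂.totalDegree ∧ 0 < g₁.totalDegree ∧ 0 < g₂.totalDegree := by
  rintro ⟨g₁, g₂, hfac, hdeg, -, -⟩
  subst ht
  have : CharP (AlgebraicClosure (ZMod 2)) 2 := charP_of_injective_algebraMap (algebraMap (ZMod 2) _).injective 2
  have h := congrArg (MvPolynomial.map (algebraMap (ZMod 2) (AlgebraicClosure (ZMod 2)))) hg
  rw [map_mul, hfac] at h
  simp only [map_mul, map_add, map_pow, map_one, MvPolynomial.map_X] at h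
  set L : MvPolynomial (Fin 2) (AlgebraicClosure (ZMod 2)) := (X 0 + 1) * (X 1 + 1) * (X 0 + X 1) with hL
  have huv : (L * g₁) * g₂ = ff (AlgebraicClosure (ZMod 2)) (2 ^ i * l + 1) := by
    rw [ff, ← h]; ring
  have hL3 : L.totalDegree ≤ 3 := by
    have a0 : (X 0 + 1 : MvPolynomial (Fin 2) (AlgebraicClosure (ZMod 2))).totalDegree ≤ 1 :=
      (totalDegree_add _ _).trans (by simp)
    have a1 : (X 1 + 1 : MvPolynomial (Fin 2) (AlgebraicClosure (ZMod 2))).totalDegree ≤ 1 :=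
      (totalDegree_add _ _).trans (by simp)
    have a2 : (X 0 + X 1 : MvPolynomial (Fin 2) (AlgebraicClosure (ZMod 2))).totalDegree ≤ 1 :=
      (totalDegree_add _ _).trans (by simp)
    have b1 := totalDegree_mul (X 0 + 1 : MvPolynomial (Fin 2) (AlgebraicClosure (ZMod 2))) (X 1 + 1)
    have b2 := totalDegree_mul ((X 0 + 1) * (X 1 + 1) : MvPolynomial (Fin 2) (AlgebraicClosure (ZMod 2))) (X 0 + X 1)
    rw [hL]; omega
  have hk : 2 ^ i * l = 2 * (2 ^ (i - 1) * l) := by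
    rw [← mul_assoc, ← pow_succ', Nat.sub_add_cancel hi]
  have hpos : 1 ≤ 2 ^ (i - 1) * l := Nat.mul_pos (by positivity) (by omega)
  have hdt := (top_data hpos (by rw [huv, hk])).1
  have hLg : L * g₁ ≠ 0 := by
    intro h0
    rw [h0] at hdt
    have hs : (L * g₁) * g₂ = 0 := by rw [h0, zero_mul]
    have h4 := (top_data (u := (0 : MvPolynomial (Fin 2) (AlgebraicClosure (ZMod 2)))) (v := 0) hpos
      (by rw [← hk, ← huv, hs, zero_mul])).1
    simp at h4
  have hmul : (L * g₁).totalDegree = L.totalDegree + g₁.totalDegree :=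
    totalDegree_mul_of_isDomain (left_ne_zero_of_mul hLg) (right_ne_zero_of_mul hLg)
  exact main_lemma hi hl hlodd hdvd hne huv hL3 (by rw [hmul, hdeg, add_comm])
end
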